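/- Let x ∈ L_+ be nonzero with normal form x = a_1 e_1 + ⋯ + a_n e_n + a c, and assume gcd(p_i, a_i) = 1 for all 1 ≤ i ≤ n. Set R := S^x, ω := (n−2)c − (e_1 + ⋯ + e_n) ∈ L, and let y ∈ L. Then the (maximal Cohen–Macaulay) R-module S(y)^x satisfies Ext^1_R(S(y)^x, R) = 0 (i.e., is a special CM R-module) if and only if for every ℓ ∈ ℤ the equality S_{y+ω+ℓx} = ∑_{m∈ℤ} S_{ω+mx} · S_{y+(ℓ−m)x} holds as ℂ-subspaces of S (the right-hand side, a sum of products of homogeneous components, is always contained in the left-hand side; it is nonzero only for finitely many m). -/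

import Mathlib

set_option synthInstance.maxHeartbeats 1000000
set_option maxHeartbeats 1000000
noncomputable section

open MvPolynomial

def LRel (ι : Type) [DecidableEq ι] (p : ι → ℕ) : AddSubgroup (Option ι → ℤ) :=
  AddSubgroup.closure
    { v | ∃ i : ι, v = (p i : ℤ) • Pi.single (some i) 1 - Pi.single (none : Option ι) 1 }

abbrev LGroup (ι : Type) [DecidableEq ι] (p : ι → ℕ) : Type :=
  (Option ι → ℤ) ⧸ LRel ι p

def egen {ι : Type} [DecidableEq ι] (p : ι → ℕ) (i : ι) : LGroup ι p :=
  QuotientAddGroup.mk (Pi.single (some i) 1)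

def cgen {ι : Type} [DecidableEq ι] (p : ι → ℕ) : LGroup ι p :=
  QuotientAddGroup.mk (Pi.single (none : Option ι) 1)

def Lplus {ι : Type} [DecidableEq ι] (p : ι → ℕ) : AddSubmonoid (LGroup ι p) :=
  AddSubmonoid.closure (Set.range (egen p))

abbrev SPoly (ι : Type) : Type := MvPolynomial (ι ⊕ Fin 2) ℂ

def SIdl (ι : Type) (p : ι → ℕ) (c0 c1 : ι → ℂ) : Ideal (SPoly ι) :=
  Ideal.span { f | ∃ i : ι,
    f = X (Sum.inl i) ^ (p i) - (C (c0 i) * X (Sum.inr 0) + C (c1 i) * X (Sum.inr 1)) }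

abbrev SAlg (ι : Type) (p : ι → ℕ) (c0 c1 : ι → ℂ) : Type := SPoly ι ⧸ SIdl ι p c0 c1

def wtA {ι : Type} [Fintype ι] [DecidableEq ι] (p : ι → ℕ) (m : (ι ⊕ Fin 2) →₀ ℕ) :
    LGroup ι p :=
  (∑ i : ι, m (Sum.inl i) • egen p i) + (m (Sum.inr 0) + m (Sum.inr 1)) • cgen p

def polyCompA {ι : Type} [Fintype ι] [DecidableEq ι] (p : ι → ℕ) (y : LGroup ι p) :
    Submodule ℂ (SPoly ι) where
  carrier := { f | ∀ m, coeff m f ≠ 0 → wtA p m = y }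
  add_mem' := by
    intro f g hf hg m hm
    by_cases h : coeff m f = 0
    · refine hg m fun h' => hm ?_
      simp [coeff_add, h, h']
    · exact hf m h
  zero_mem' := by
    intro m hm
    simp at hm
  smul_mem' := by
    intro c f hf m hm
    refine hf m fun h => hm ?_
    simp [coeff_smul, h]

def SCompA {ι : Type} [Fintype ι] [DecidableEq ι] (p : ι → ℕ) (c0 c1 : ι → ℂ)
    (y : LGroup ι p) : Submodule ℂ (SAlg ι p c0 c1) :=
  (polyCompA p y).map (Ideal.Quotient.mkₐ ℂ (SIdl ι p c0 c1)).toLinearMap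

def SVerA {ι : Type} [Fintype ι] [DecidableEq ι] (p : ι → ℕ) (c0 c1 : ι → ℂ)
    (x : LGroup ι p) : Submodule ℂ (SAlg ι p c0 c1) :=
  ⨆ k : ℤ, SCompA p c0 c1 (k • x)

def SShiftA {ι : Type} [Fintype ι] [DecidableEq ι] (p : ι → ℕ) (c0 c1 : ι → ℂ)
    (y x : LGroup ι p) : Submodule ℂ (SAlg ι p c0 c1) :=
  ⨆ k : ℤ, SCompA p c0 c1 (y + k • x)


section ExtPart
open CategoryTheory


lemma ext_iff_hom {R : Type} [CommRing R] (X Y : ModuleCat.{0} R) (P : ProjectiveResolution X) :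
    Subsingleton (((Ext R (ModuleCat R) 1).obj (Opposite.op X)).obj Y) ↔
    ∀ f : P.complex.X 1 ⟶ Y, P.complex.d 2 1 ≫ f = 0 → ∃ g : P.complex.X 0 ⟶ Y, 
      P.complex.d 1 0 ≫ g = f := by
  rw [← ModuleCat.isZero_iff_subsingleton, (P.isoExt 1 Y).isZero_iff, 
   ← HomologicalComplex.exactAt_iff_isZero_homology,
    HomologicalComplex.exactAt_iff' _ 0 1 2 (by simp) (by simp),
    ShortComplex.moduleCat_exact_iff]
  rfl


lemma ker_ext_indep {R : Type} [CommRing R] {M Y P F : Type} [AddCommGroup M] [Module R M]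
    [AddCommGroup Y] [Module R Y] [AddCommGroup P] [Module R P] [AddCommGroup F] [Module R F]
    [Module.Projective R P] [Module.Projective R F]
    (e : P →ₗ[R] M) (he : Function.Surjective e) (q : F →ₗ[R] M) (hq : Function.Surjective q)
    (H : ∀ h : LinearMap.ker e →ₗ[R] Y, ∃ H : P →ₗ[R] Y, ∀ k, H k.1 = h k) :
    ∀ h : LinearMap.ker q →ₗ[R] Y, ∃ H : F →ₗ[R] Y, ∀ k, H k.1 = h k := by
  intro h
  obtain ⟨a, ha⟩ := Module.projective_lifting_property e q he
  obtain ⟨b, hb⟩ := Module.projective_lifting_property q e hq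
  have ha' : ∀ z, e (a z) = q z := fun z => LinearMap.congr_fun ha z
  have hb' : ∀ z, q (b z) = e z := fun z => LinearMap.congr_fun hb z
  obtain ⟨H1, hH1⟩ := H (h ∘ₗ (b.restrict (p := LinearMap.ker e) (q := LinearMap.ker q)
    (fun z hz => by simpa [hb'] using hz)))
  let d : F →ₗ[R] LinearMap.ker q := (LinearMap.id - b ∘ₗ a).codRestrict _ (fun z => by
    simp [hb', ha'])
  refine ⟨H1 ∘ₗ a + h ∘ₗ d, fun k => ?_⟩
  have h1 := hH1 ⟨a k.1, by simp [ha']⟩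
  simp only [LinearMap.add_apply, LinearMap.comp_apply] at h1 ⊢
  rw [h1, ← map_add]
  congr 1
  ext
  simp [d]

lemma ext_iff_ker {R : Type} [CommRing R] (M Y : Type) [AddCommGroup M] [Module R M]
    [AddCommGroup Y] [Module R Y]  :
    Subsingleton (((Ext R (ModuleCat.{0} R) 1).obj (Opposite.op (ModuleCat.of R M))).obj
      (ModuleCat.of R Y)) ↔
    ∀ h : LinearMap.ker (Finsupp.linearCombination R (id : M → M)) →ₗ[R] Y,
      ∃ H : (M →₀ R) →ₗ[R] Y, ∀ k, H k.1 = h k := by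
  have P : ProjectiveResolution (ModuleCat.of R M) := ProjectiveResolution.of _
  rw [ext_iff_hom _ _ P]
  have ex0 := P.exact₀
  rw [ShortComplex.moduleCat_exact_iff] at ex0
  have ex1 := (P.exact_succ 0)
  rw [ShortComplex.moduleCat_exact_iff] at ex1
  have surj : Function.Surjective (P.π.f 0).hom := by
    rw [← ModuleCat.epi_iff_surjective]; infer_instance
  have proj : Module.Projective R (P.complex.X 0) := by
    have := P.projective 0
    exact (IsProjective.iff_projective (P.complex.X 0)).2 this
  have hd1 : ∀ z, (P.π.f 0).hom ((P.complex.d 1 0).hom z) = 0 := fun z => by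
    have := P.complex_d_comp_π_f_zero
    exact congrArg (fun f => f.hom z) this
  let e : P.complex.X 0 →ₗ[R] M := (P.π.f 0).hom
  have surj' : Function.Surjective e := surj
  let d1 : P.complex.X 1 →ₗ[R] LinearMap.ker e := (P.complex.d 1 0).hom.codRestrict _ hd1
  have hd1s : Function.Surjective d1 := by
    rintro ⟨z, hz⟩
    obtain ⟨w, hw⟩ := ex0 z hz
    exact ⟨w, Subtype.ext hw⟩
  have hd21 : ∀ z, (P.complex.d 1 0).hom ((P.complex.d 2 1).hom z) = 0 := fun z => by
    have := P.complex.d_comp_d 2 1 0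
    exact congrArg (fun f => f.hom z) this
  have hq : Function.Surjective (Finsupp.linearCombination R (id : M → M)) :=
    Finsupp.linearCombination_id_surjective R M
  constructor
  · intro H
    refine ker_ext_indep e surj' _ hq fun h => ?_
    obtain ⟨g, hg⟩ := H (ModuleCat.ofHom (h ∘ₗ d1)) (by
      ext z
      have : d1 ((P.complex.d 2 1).hom z) = 0 := Subtype.ext (hd21 z)
      simp [this])
    refine ⟨g.hom, fun k => ?_⟩
    obtain ⟨w, rfl⟩ := hd1s k
    exact congrArg (fun f => f.hom w) hg
  · intro H f hf
    have H' := ker_ext_indep _ hq e surj' H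
    have hle : LinearMap.ker d1 ≤ LinearMap.ker f.hom := by
      intro z hz
      obtain ⟨w, hw⟩ := ex1 z (congrArg Subtype.val hz)
      have := congrArg (fun f => f.hom w) hf
      rw [LinearMap.mem_ker, ← hw]
      exact this
    obtain ⟨g, hg⟩ := H' ((LinearMap.ker d1).liftQ f.hom hle ∘ₗ
      (d1.quotKerEquivOfSurjective hd1s).symm.toLinearMap)
    refine ⟨ModuleCat.ofHom g, ?_⟩
    ext z
    have h2 := hg (d1 z)
    have h3 : (d1.quotKerEquivOfSurjective hd1s).symm (d1 z) = Submodule.Quotient.mk z := by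
      rw [LinearEquiv.symm_apply_eq]; rfl
    simp only [LinearMap.comp_apply, LinearEquiv.coe_coe, h3, Submodule.liftQ_apply] at h2
    exact h2

end ExtPart

section Core

variable {A R S : Type} [CommRing A] [CommRing R] [CommRing S] [Algebra A R] [Algebra R S]
  [Algebra A S] [IsScalarTower A R S]

lemma proj_torsfree {X : Type} [AddCommGroup X] [Module A X] [Module.Projective A X] (u : A)
    (hu : ∀ a, u * a = 0 → a = 0) (x : X) (hx : u • x = 0) : x = 0 := by
  obtain ⟨s, hs⟩ := Module.Projective.out (R := A) (P := X)
  have h1 : s x = 0 := by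
    ext i
    apply hu
    have : s (u • x) = 0 := by rw [hx, map_zero]
    rw [map_smul] at this
    simpa using DFunLike.congr_fun this i
  rw [← hs x, h1, map_zero]

lemma proj_reg {X : Type} [AddCommGroup X] [Module A X] [Module.Projective A X] (u v : A)
    (hreg : ∀ a b, v * a = u * b → ∃ c, a = u * c) (x y : X) (hx : v • x = u • y) :
    ∃ z, x = u • z := by
  obtain ⟨s, hs⟩ := Module.Projective.out (R := A) (P := X)
  have h1 : ∀ i, ∃ c, s x i = u * c := by
    intro i
    apply hreg _ (s y i)
    have : s (v • x) = s (u • y) := by rw [hx]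
    rw [map_smul, map_smul] at this
    simpa using DFunLike.congr_fun this i
  choose c hc using h1
  refine ⟨∑ i ∈ (s x).support, c i • i, ?_⟩
  rw [Finset.smul_sum]
  conv_lhs => rw [← hs x, Finsupp.linearCombination_apply, Finsupp.sum]
  refine Finset.sum_congr rfl fun i _ => ?_
  rw [hc, mul_smul]; rfl

variable (W W' M N : Submodule R S)

/-- scalar-extension map `k ↦ k ⊗ w`. -/
def TT (w : W) : (M →₀ R) →ₗ[R] (M →₀ W) :=
  Finsupp.mapRange.linearMap (LinearMap.toSpanSingleton R W w)

/-- contraction map. -/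
def DD (σ : W →ₗ[R] R) : (M →₀ W) →ₗ[R] (M →₀ R) :=
  Finsupp.mapRange.linearMap σ

/-- multiplication map `M ⊗ W → S`. -/
def mu : (M →₀ W) →ₗ[R] S :=
  Finsupp.lsum R (fun m : M => (LinearMap.mulLeft R (m : S)) ∘ₗ W.subtype)

variable {W M}

@[simp] lemma TT_apply (w : W) (k : M →₀ R) (m : M) : TT W M w k m = k m • w := by
  simp [TT]

@[simp] lemma DD_apply (σ : W →ₗ[R] R) (f : M →₀ W) (m : M) : DD W M σ f m = σ (f m) := by
  simp [DD]

lemma TT_single (w : W) (r : R) (m : M) : TT W M w (Finsupp.single m r) =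
    Finsupp.single m (r • w) := by
  simp [TT]

lemma TT_add (w1 w2 : W) (k : M →₀ R) : TT W M (w1 + w2) k = TT W M w1 k + TT W M w2 k := by
  ext m; simp

lemma TT_smul (r : R) (w : W) (k : M →₀ R) : TT W M (r • w) k = TT W M w (r • k) := by
  ext m; simp [smul_comm (k m) r]

@[simp] lemma mu_single (m : M) (w : W) : mu W M (Finsupp.single m w) = (m : S) * w := by
  simp [mu]

lemma mu_TT (w : W) (k : M →₀ R) : mu W M (TT W M w k) =
    w * (Finsupp.linearCombination R (id : M → M) k : M) := by
  induction k using Finsupp.induction_linear with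
  | zero => simp
  | add f g hf hg => simp [hf, hg, mul_add]
  | single m r => simp [TT_single, mul_comm]

lemma lc_DD (σ : W →ₗ[R] R) (w' : S) (hσ : ∀ w, algebraMap R S (σ w) = w' * w) (f : M →₀ W) :
    ((Finsupp.linearCombination R (id : M → M) (DD W M σ f) : M) : S) = w' * mu W M f := by
  induction f using Finsupp.induction_linear with
  | zero => simp
  | add f g hf hg => simp [hf, hg, mul_add]
  | single m r =>
    simp [DD, Algebra.smul_def, hσ]; ring

lemma DD_TT (σ : W →ₗ[R] R) (w : W) (k : M →₀ R) : DD W M σ (TT W M w k) = σ w • k := by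
  ext m; simp [mul_comm]

lemma mu_mem (f : M →₀ W) : mu W M f ∈ W * M := by
  induction f using Finsupp.induction_linear with
  | zero => simp
  | add f g hf hg => rw [map_add]; exact add_mem hf hg
  | single m r => rw [mu_single, mul_comm (m : S)]; exact Submodule.mul_mem_mul r.2 m.2

lemma mu_surj (z : S) (hz : z ∈ W * M) : ∃ f, mu W M f = z := by
  refine Submodule.mul_induction_on hz (fun w hw m hm => ?_) ?_
  · exact ⟨Finsupp.single ⟨m, hm⟩ ⟨w, hw⟩, by simp [mul_comm]⟩
  · rintro _ _ ⟨f, rfl⟩ ⟨g, rfl⟩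
    exact ⟨f + g, by simp⟩

variable {W'} 
/-- the first construction: extending a homomorphism `K → R` to the saturation. -/
lemma exists_Hz (hinj : Function.Injective (algebraMap R S))
    (σ : W' → W →ₗ[R] R) (hσ : ∀ w' w, algebraMap R S (σ w' w) = w' * w)
    (h : LinearMap.ker (Finsupp.linearCombination R (id : M → M)) →ₗ[R] R)
    (hD : ∀ (w' : W') (f : LinearMap.ker (mu W M)),
      DD W M (σ w') f.1 ∈ LinearMap.ker (Finsupp.linearCombination R (id : M → M)))
    (z : S) (hz : z ∈ W * W') :
    ∃ H : LinearMap.ker (mu W M) →ₗ[R] W, ∀ f (w' : W'),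
      (w' : S) * H f = z * algebraMap R S (h ⟨DD W M (σ w') f.1, hD w' f⟩) := by
  refine Submodule.mul_induction_on hz (fun w hw w0 hw0 => ?_) ?_
  · refine ⟨(LinearMap.toSpanSingleton R W ⟨w, hw⟩) ∘ₗ h ∘ₗ
      ((DD W M (σ ⟨w0, hw0⟩)).restrict (p := LinearMap.ker (mu W M))
        (q := LinearMap.ker (Finsupp.linearCombination R (id : M → M))) 
        (fun f hf => hD ⟨w0, hw0⟩ ⟨f, hf⟩)), fun f w' => ?_⟩
    have key : (σ w' ⟨w, hw⟩) • (⟨DD W M (σ ⟨w0, hw0⟩) f.1, hD _ f⟩ :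
       LinearMap.ker (Finsupp.linearCombination R (id : M → M))) =
       (σ ⟨w0, hw0⟩ ⟨w, hw⟩) • ⟨DD W M (σ w') f.1, hD _ f⟩ := by
      ext m
      apply hinj
      simp [hσ]; ring
    have k2 := congrArg (fun t => algebraMap R S (h t)) key
    simp only [map_smul, smul_eq_mul, map_mul, hσ] at k2
    simp only [LinearMap.comp_apply, LinearMap.toSpanSingleton_apply, Submodule.coe_smul,
      Algebra.smul_def, LinearMap.restrict_apply]
    linear_combination k2
  · rintro z1 z2 ⟨H1, h1⟩ ⟨H2, h2⟩
    refine ⟨H1 + H2, fun f w' => ?_⟩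
    simp only [LinearMap.add_apply, Submodule.coe_add, mul_add, h1, h2]
    ring

/-- multiplication by an element of `W * W'` maps the saturation into the span. -/
lemma exists_span (σ : W' → W →ₗ[R] R) (hσ : ∀ w' w, algebraMap R S (σ w' w) = w' * w)
    (hD : ∀ (w' : W') (f : LinearMap.ker (mu W M)),
      DD W M (σ w') f.1 ∈ LinearMap.ker (Finsupp.linearCombination R (id : M → M)))
    (X : AddSubmonoid (M →₀ W))
    (hX : ∀ w, ∀ k ∈ LinearMap.ker (Finsupp.linearCombination R (id : M → M)), TT W M w k ∈ X)
    (z : S) (hz : z ∈ W * W') :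
    ∃ r : R, algebraMap R S r = z ∧ ∀ f : LinearMap.ker (mu W M), r • f.1 ∈ X := by
  refine Submodule.mul_induction_on hz (fun w hw w0 hw0 => ?_) ?_
  · refine ⟨σ ⟨w0, hw0⟩ ⟨w, hw⟩, by rw [hσ, mul_comm], fun f => ?_⟩
    have := hX ⟨w, hw⟩ _ (hD ⟨w0, hw0⟩ f)
    convert this using 1
    ext m
    simp [Algebra.smul_def, hσ]; ring
  · rintro z1 z2 ⟨r1, h1, h1'⟩ ⟨r2, h2, h2'⟩
    refine ⟨r1 + r2, by simp [h1, h2], fun f => ?_⟩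
    rw [add_smul]
    exact add_mem (h1' f) (h2' f)

lemma ann_eq_zero (u : A) (hu : ∀ s : S, u • s = 0 → s = 0)
    (huW : algebraMap A S u ∈ W * W') (s : S) (h : ∀ w' : W', (w' : S) * s = 0) : s = 0 := by
  apply hu
  rw [Algebra.smul_def]
  refine Submodule.mul_induction_on huW (fun w hw w0 hw0 => ?_) ?_
  · rw [mul_assoc, h ⟨w0, hw0⟩, mul_zero]
  · intro a b ha hb
    rw [add_mul, ha, hb, add_zero]


variable {N}

lemma split_extend {X Y : Type} [AddCommMonoid X] [Module A X] [AddCommMonoid Y] [Module A Y]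
    [Module.Projective A Y] (m : X →ₗ[A] Y) (hm : Function.Surjective m)
    (ψ : LinearMap.ker m →ₗ[A] A) : ∃ Ψ : X →ₗ[A] A, ∀ k, Ψ k.1 = ψ k := by
  let _ : AddCommGroup X := Module.addCommMonoidToAddCommGroup A
  let _ : AddCommGroup Y := Module.addCommMonoidToAddCommGroup A
  obtain ⟨s, hs⟩ := Module.projective_lifting_property m LinearMap.id hm
  have hs' : ∀ z, m (s z) = z := fun z => LinearMap.congr_fun hs z
  let d : X →ₗ[A] LinearMap.ker m := (LinearMap.id - s ∘ₗ m).codRestrict _ (fun z => by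
    simp [hs'])
  refine ⟨ψ ∘ₗ d, fun k => ?_⟩
  rw [LinearMap.comp_apply]
  congr 1
  apply Subtype.ext
  have : m k.1 = 0 := k.2
  simp [d, this]

lemma core_mpr
    (hinj : Function.Injective (algebraMap R S))
    (φ : S →ₗ[A] A) 
    (hφ : ∀ ψ : W →ₗ[A] A, ∃ r : R, ∀ w : W, ψ w = φ (r • (w : S)))
    (hφ' : ∀ r : R, (∀ w : W, φ (r • (w : S)) = 0) → r = 0)
    [Module.Projective A S] [Module.Projective A W] [Module.Projective A N]
    (u v : A) (hu : ∀ a, u * a = 0 → a = 0)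
    (hreg : ∀ a b, v * a = u * b → ∃ c, a = u * c)
    (huW : algebraMap A S u ∈ W * W') (hvW : algebraMap A S v ∈ W * W')
    (σ : W' → W →ₗ[R] R) (hσ : ∀ w' w, algebraMap R S (σ w' w) = w' * w)
    (hWM : N = W * M) :
    ∀ h : LinearMap.ker (Finsupp.linearCombination R (id : M → M)) →ₗ[R] R,
      ∃ H : (M →₀ R) →ₗ[R] R, ∀ k, H k.1 = h k := by
  intro h
  have hD : ∀ (w' : W') (f : LinearMap.ker (mu W M)),
      DD W M (σ w') f.1 ∈ LinearMap.ker (Finsupp.linearCombination R (id : M → M)) := by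
    intro w' f
    rw [LinearMap.mem_ker]
    apply Subtype.ext
    rw [lc_DD (σ w') w' (hσ w'), f.2]
    simp
  have tfS : ∀ s : S, u • s = 0 → s = 0 := proj_torsfree u hu
  obtain ⟨Hu, hHu⟩ := exists_Hz hinj σ hσ h hD _ huW
  obtain ⟨Hv, hHv⟩ := exists_Hz hinj σ hσ h hD _ hvW
  have hdiv : ∀ f, ∃ z : W, u • z = Hu f := by
    intro f
    obtain ⟨z, hz⟩ := proj_reg u v hreg (Hu f) (Hv f) (by
      apply Subtype.ext
      rw [← sub_eq_zero]
      apply ann_eq_zero u tfS huW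
      intro w'
      have h1 := hHu f w'
      have h2 := hHv f w'
      simp only [Submodule.coe_smul_of_tower, Algebra.smul_def]
      linear_combination (algebraMap A S v) * h1 - (algebraMap A S u) * h2)
    exact ⟨z, hz.symm⟩
  choose H0 hH0 using hdiv
  have hH0' : ∀ f (w' : W'), (w' : S) * H0 f = algebraMap R S (h ⟨DD W M (σ w') f.1, hD w' f⟩) := by
    intro f w'
    rw [← sub_eq_zero]
    apply tfS
    have h1 := hHu f w'
    rw [← hH0] at h1
    simp only [Submodule.coe_smul_of_tower, Algebra.smul_def] at h1 ⊢
    linear_combination h1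
  have annW : ∀ w : W, (∀ w' : W', (w' : S) * w = 0) → w = 0 := fun w hw =>
    Subtype.ext (ann_eq_zero u tfS huW _ hw)
  let H : LinearMap.ker (mu W M) →ₗ[R] W :=
    { toFun := H0
      map_add' := fun f g => by
        rw [← sub_eq_zero]
        apply annW
        intro w'
        have e : (⟨DD W M (σ w') (f + g).1, hD w' (f + g)⟩ :
          LinearMap.ker (Finsupp.linearCombination R (id : M → M))) =
          ⟨DD W M (σ w') f.1, hD w' f⟩ + ⟨DD W M (σ w') g.1, hD w' g⟩ := by
          apply Subtype.ext; simp
        have h1 := hH0' (f + g) w'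
        rw [e, map_add, map_add, ← hH0', ← hH0'] at h1
        simp only [Submodule.coe_sub, Submodule.coe_add]
        linear_combination h1
      map_smul' := fun r f => by
        rw [← sub_eq_zero]
        apply annW
        intro w'
        have e : (⟨DD W M (σ w') (r • f).1, hD w' (r • f)⟩ :
          LinearMap.ker (Finsupp.linearCombination R (id : M → M))) =
          r • ⟨DD W M (σ w') f.1, hD w' f⟩ := by
          apply Subtype.ext; simp
        have h1 := hH0' (r • f) w'
        rw [e, map_smul, smul_eq_mul, map_mul, ← hH0'] at h1
        simp only [Submodule.coe_sub, Submodule.coe_smul, RingHom.id_apply, Algebra.smul_def]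
        linear_combination h1 }
  have hT : ∀ w, ∀ k : LinearMap.ker (Finsupp.linearCombination R (id : M → M)),
      TT W M w k.1 ∈ LinearMap.ker (mu W M) := by
    intro w k
    rw [LinearMap.mem_ker, mu_TT, k.2]; simp
  have hHT : ∀ w, ∀ k : LinearMap.ker (Finsupp.linearCombination R (id : M → M)),
      H ⟨TT W M w k.1, hT w k⟩ = h k • w := by
    intro w k
    rw [← sub_eq_zero]
    apply annW
    intro w'
    have h1 := hH0' ⟨TT W M w k.1, hT w k⟩ w'
    have e : (⟨DD W M (σ w') (TT W M w k.1), hD w' ⟨TT W M w k.1, hT w k⟩⟩ :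
          LinearMap.ker (Finsupp.linearCombination R (id : M → M))) = σ w' w • k := by
      apply Subtype.ext; simp [DD_TT]
    rw [e, map_smul, smul_eq_mul, map_mul, hσ] at h1
    simp only [Submodule.coe_sub, Submodule.coe_smul, Algebra.smul_def]
    change (w' : S) * (H0 _ - _) = 0
    linear_combination h1
  -- splitting
  let μN : (M →₀ W) →ₗ[A] N :=
    ((mu W M).codRestrict N (fun f => hWM ▸ mu_mem f)).restrictScalars A
  have hμs : Function.Surjective μN := by
    rintro ⟨z, hz⟩
    obtain ⟨f, hf⟩ := mu_surj z (hWM ▸ hz)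
    exact ⟨f, Subtype.ext hf⟩
  have hker : ∀ f : LinearMap.ker μN, f.1 ∈ LinearMap.ker (mu W M) := fun f => 
    congrArg Subtype.val f.2
  let ic : LinearMap.ker μN →ₗ[A] LinearMap.ker (mu W M) :=
    { toFun := fun f => ⟨f.1, hker f⟩
      map_add' := fun f g => rfl
      map_smul' := fun a f => rfl }
  obtain ⟨ψ, hψ⟩ := split_extend μN hμs
    (φ ∘ₗ (W.subtype.restrictScalars A) ∘ₗ (H.restrictScalars A) ∘ₗ ic)
  have hr := fun m : M => hφ (ψ ∘ₗ (Finsupp.lsingle m : W →ₗ[A] (M →₀ W)))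
  choose r hr using hr
  let q : (M →₀ R) →ₗ[R] R := Finsupp.linearCombination R r
  have hq : ∀ (w : W) (k : M →₀ R), φ (q k • (w : S)) = ψ (TT W M w k) := by
    intro w k
    induction k using Finsupp.induction_linear with
    | zero => simp
    | add f g hf hg => simp [hf, hg, add_smul]
    | single m t =>
      have := hr m (t • w)
      simp only [LinearMap.comp_apply, Finsupp.lsingle_apply] at this
      rw [TT_single, this]
      simp [q, mul_smul, smul_comm t]
  refine ⟨q, fun k => ?_⟩
  rw [← sub_eq_zero]
  apply hφ'
  intro w
  rw [sub_smul, map_sub, hq, sub_eq_zero]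
  have := hHT w k
  have h3 := hψ ⟨TT W M w k.1, Subtype.ext (hT w k)⟩
  rw [h3]
  simp only [LinearMap.comp_apply, LinearMap.restrictScalars_apply]
  change φ (H ⟨TT W M w k.1, hT w k⟩ : W) = _
  rw [this]
  rfl

lemma surj_of_extend {X Y : Type} [AddCommMonoid X] [Module A X] [AddCommMonoid Y] [Module A Y]
    [Module.Projective A X] [Module.Projective A Y] (m : X →ₗ[A] Y)
    (u v : A) (hu : ∀ a, u * a = 0 → a = 0)
    (hreg : ∀ a b, v * a = u * b → ∃ c, a = u * c)
    (hmax : (Ideal.span {u, v}).IsMaximal)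
    (huY : ∀ y, ∃ x, m x = u • y) (hvY : ∀ y, ∃ x, m x = v • y)
    (hext : ∀ ψ : LinearMap.ker m →ₗ[A] A, ∃ Ψ : X →ₗ[A] A, ∀ k, Ψ k.1 = ψ k) :
    Function.Surjective m := by
  let _ : AddCommGroup X := Module.addCommMonoidToAddCommGroup A
  let _ : AddCommGroup Y := Module.addCommMonoidToAddCommGroup A
  by_contra hns
  rw [← LinearMap.range_eq_top] at hns
  obtain ⟨n0, hn0⟩ : ∃ n0, n0 ∉ LinearMap.range m := by
    by_contra h
    push Not at h
    exact hns (eq_top_iff.2 fun y _ => h y)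
  have hm𝔪 : Module.IsTorsionBySet A (Y ⧸ LinearMap.range m) (Ideal.span {u, v} : Ideal A) := by
    rw [← Module.isTorsionBySet_iff_is_torsion_by_span]
    rintro y ⟨a, ha⟩
    obtain ⟨y, rfl⟩ := Submodule.Quotient.mk_surjective _ y
    change a • Submodule.Quotient.mk y = _
    rw [← Submodule.Quotient.mk_smul, Submodule.Quotient.mk_eq_zero]
    rcases ha with rfl | ha
    · exact huY y
    · rw [Set.mem_singleton_iff.1 ha]; exact hvY y
  let _ : Field (A ⧸ (Ideal.span {u, v} : Ideal A)) := Ideal.Quotient.field _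
  let _ := hm𝔪.module
  have _ := hm𝔪.isScalarTower (S := A)
  obtain ⟨χ, hχ⟩ : ∃ χ : Module.Dual (A ⧸ (Ideal.span {u, v} : Ideal A)) (Y ⧸ LinearMap.range m),
      χ (Submodule.Quotient.mk n0) ≠ 0 := by
    by_contra h
    push Not at h
    rw [Module.forall_dual_apply_eq_zero_iff, Submodule.Quotient.mk_eq_zero] at h
    exact hn0 h
  let χ' : Y →ₗ[A] (A ⧸ (Ideal.span {u, v} : Ideal A)) :=
    (χ.restrictScalars A) ∘ₗ (LinearMap.range m).mkQ
  obtain ⟨Λ, hΛ⟩ := Module.projective_lifting_property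
    (Ideal.span {u, v} : Ideal A).mkQ χ' (Submodule.mkQ_surjective _)
  have hΛ' : ∀ y, Submodule.Quotient.mk (Λ y) = χ' y := fun y => LinearMap.congr_fun hΛ y
  have hΛn0 : Λ n0 ∉ Ideal.span {u, v} := by
    intro h
    apply hχ
    have h2 := hΛ' n0
    rw [(Submodule.Quotient.mk_eq_zero _).2 h] at h2
    exact h2.symm
  have hΛm : ∀ x, Λ (m x) ∈ Ideal.span {u, v} := by
    intro x
    have h2 := hΛ' (m x)
    have h3 : χ' (m x) = 0 := by
      have : (LinearMap.range m).mkQ (m x) = 0 := by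
        simp
      simp only [χ', LinearMap.comp_apply, this, map_zero]
    rw [h3] at h2
    exact (Submodule.Quotient.mk_eq_zero _).1 h2
  let pr : (A × A) →ₗ[A] (Ideal.span {u, v} : Ideal A) :=
    ((LinearMap.mulLeft A v ∘ₗ LinearMap.fst A A A) -
      (LinearMap.mulLeft A u ∘ₗ LinearMap.snd A A A)).codRestrict _ (fun z => by
        rw [Ideal.mem_span_pair]
        exact ⟨-z.2, z.1, by simp; ring⟩)
  have hpr : Function.Surjective pr := by
    rintro ⟨z, hz⟩
    obtain ⟨a, b, hab⟩ := Ideal.mem_span_pair.1 hz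
    refine ⟨(b, -a), Subtype.ext ?_⟩
    simp [pr, ← hab]; ring
  obtain ⟨PQ, hPQ⟩ := Module.projective_lifting_property pr
    ((Λ ∘ₗ m).codRestrict (Ideal.span {u, v} : Ideal A) hΛm) hpr
  have hPQ' : ∀ x, v * (PQ x).1 - u * (PQ x).2 = Λ (m x) := fun x =>
    congrArg Subtype.val (LinearMap.congr_fun hPQ x)
  have hdiv : ∀ k : LinearMap.ker m, ∃ c, (PQ k.1).1 = u * c := by
    intro k
    apply hreg _ (PQ k.1).2
    have := hPQ' k.1
    rw [show m k.1 = 0 from k.2, map_zero] at this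
    exact sub_eq_zero.1 this
  choose ψ0 hψ0 using hdiv
  have hu' : ∀ a b, u * a = u * b → a = b := fun a b h => by
    rw [← sub_eq_zero]; apply hu; rw [mul_sub, h, sub_self]
  let ψ : LinearMap.ker m →ₗ[A] A :=
    { toFun := ψ0
      map_add' := fun f g => by
        apply hu'
        rw [mul_add, ← hψ0, ← hψ0, ← hψ0]; simp
      map_smul' := fun a f => by
        apply hu'
        have h1 := hψ0 (a • f)
        have h2 := hψ0 f
        rw [← h1]
        simp only [Submodule.coe_smul, map_smul, Prod.smul_fst, smul_eq_mul, RingHom.id_apply, h2]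
        ring }
  obtain ⟨Ψ, hΨ⟩ := hext ψ
  have hP : ∀ k ∈ LinearMap.ker m, (PQ k).1 - u * Ψ k = 0 := by
    intro k hk
    have h1 := hΨ ⟨k, hk⟩
    have h2 := hψ0 ⟨k, hk⟩
    simp only at h1 h2
    rw [h2, h1]; exact sub_self _
  have hQ : ∀ k ∈ LinearMap.ker m, (PQ k).2 - v * Ψ k = 0 := by
    intro k hk
    apply hu
    have h1 := hP k hk
    have h2 := hPQ' k
    rw [show m k = 0 from hk, map_zero] at h2
    linear_combination v * h1 - h2
  obtain ⟨f, hf⟩ := huY n0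
  obtain ⟨g, hg⟩ := hvY n0
  have hfg : v • f - u • g ∈ LinearMap.ker m := by
    rw [LinearMap.mem_ker, map_sub, map_smul, map_smul, hf, hg, smul_comm, sub_self]
  have h1 := hP _ hfg
  have h2 := hQ _ hfg
  simp only [map_sub, map_smul, Prod.fst_sub, Prod.snd_sub, Prod.smul_fst, Prod.smul_snd,
    smul_eq_mul] at h1 h2
  obtain ⟨p, hp⟩ := hreg ((PQ f).1 - u * Ψ f) ((PQ g).1 - u * Ψ g) (by linear_combination h1)
  obtain ⟨c, hc⟩ := hreg ((PQ f).2 - v * Ψ f) ((PQ g).2 - v * Ψ g) (by linear_combination h2)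
  apply hΛn0
  rw [Ideal.mem_span_pair]
  refine ⟨-c, p, hu' _ _ ?_⟩
  have h3 := hPQ' f
  rw [hf, map_smul, smul_eq_mul] at h3
  linear_combination h3 - v * hp + u * hc

lemma core_mp
    (hinj : Function.Injective (algebraMap R S))
    (φ : S →ₗ[A] A) 
    (hφ : ∀ ψ : W →ₗ[A] A, ∃ r : R, ∀ w : W, ψ w = φ (r • (w : S)))
    (hφ' : ∀ r : R, (∀ w : W, φ (r • (w : S)) = 0) → r = 0)
    [Module.Projective A W] [Module.Projective A N]
    (u v : A) (hu : ∀ a, u * a = 0 → a = 0)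
    (hreg : ∀ a b, v * a = u * b → ∃ c, a = u * c)
    (hmax : (Ideal.span {u, v}).IsMaximal)
    (huW : algebraMap A S u ∈ W * W') (hvW : algebraMap A S v ∈ W * W')
    (σ : W' → W →ₗ[R] R) (hσ : ∀ w' w, algebraMap R S (σ w' w) = w' * w)
    (hWM : W * M ≤ N) (hWN : W' * N ≤ M)
    (hext : ∀ h : LinearMap.ker (Finsupp.linearCombination R (id : M → M)) →ₗ[R] R,
      ∃ H : (M →₀ R) →ₗ[R] R, ∀ k, H k.1 = h k) : N = W * M := by
  have hD : ∀ (w' : W') (f : LinearMap.ker (mu W M)),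
      DD W M (σ w') f.1 ∈ LinearMap.ker (Finsupp.linearCombination R (id : M → M)) := by
    intro w' f
    rw [LinearMap.mem_ker]
    apply Subtype.ext
    rw [lc_DD (σ w') w' (hσ w'), f.2]
    simp
  have hT : ∀ w, ∀ k : LinearMap.ker (Finsupp.linearCombination R (id : M → M)),
      TT W M w k.1 ∈ LinearMap.ker (mu W M) := by
    intro w k
    rw [LinearMap.mem_ker, mu_TT, k.2]; simp
  let μN : (M →₀ W) →ₗ[A] N :=
    ((mu W M).codRestrict N (fun f => hWM (mu_mem f))).restrictScalars A
  have hdivN : ∀ a : A, algebraMap A S a ∈ W * W' → ∀ y, ∃ x, μN x = a • y := by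
    intro a ha y
    have : a • (y : S) ∈ W * M := by
      rw [Algebra.smul_def]
      have h1 := Submodule.mul_mem_mul ha y.2
      rw [mul_assoc] at h1
      exact mul_le_mul' le_rfl hWN h1
    obtain ⟨x, hx⟩ := mu_surj _ this
    exact ⟨x, Subtype.ext hx⟩
  have : Module.Projective A (M →₀ W) := by
    classical
    exact Module.Projective.of_equiv (finsuppLequivDFinsupp A (ι := M) (M := W)).symm
  have hs : Function.Surjective μN := by
    refine surj_of_extend μN u v hu hreg hmax (hdivN u huW) (hdivN v hvW) fun ψ => ?_
    -- define h
    have hT' : ∀ w, ∀ k : LinearMap.ker (Finsupp.linearCombination R (id : M → M)),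
      TT W M w k.1 ∈ LinearMap.ker μN := fun w k => Subtype.ext (hT w k)
    have hk : ∀ k : LinearMap.ker (Finsupp.linearCombination R (id : M → M)),
        ∃ r : R, ∀ w : W, ψ ⟨TT W M w k.1, hT' w k⟩ = φ (r • (w : S)) := by
      intro k
      let ψk : W →ₗ[A] A :=
        { toFun := fun w => ψ ⟨TT W M w k.1, hT' w k⟩
          map_add' := fun w1 w2 => by
            rw [← map_add]; congr 1; apply Subtype.ext; exact TT_add _ _ _
          map_smul' := fun a w => by
            rw [RingHom.id_apply, ← map_smul]; congr 1; apply Subtype.ext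
            change TT W M (a • w) k.1 = a • TT W M w k.1
            ext m
            simp only [TT_apply, Finsupp.smul_apply, Submodule.coe_smul,
              Submodule.coe_smul_of_tower]
            exact (smul_comm _ _ _) }
      exact hφ ψk
    choose h0 hh0 using hk
    have huniq : ∀ r s : R, (∀ w : W, φ (r • (w : S)) = φ (s • (w : S))) → r = s := by
      intro r s hrs
      rw [← sub_eq_zero]
      apply hφ'
      intro w
      rw [sub_smul, map_sub, hrs, sub_self]
    let h : LinearMap.ker (Finsupp.linearCombination R (id : M → M)) →ₗ[R] R :=
      { toFun := h0
        map_add' := fun k l => by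
          apply huniq
          intro w
          rw [add_smul, map_add, ← hh0, ← hh0, ← hh0, ← map_add]
          congr 1; apply Subtype.ext; exact map_add (TT W M w) _ _
        map_smul' := fun r k => by
          apply huniq
          intro w
          have h1 := hh0 k (r • w)
          rw [← hh0, RingHom.id_apply, smul_eq_mul, mul_comm, mul_smul]
          rw [Submodule.coe_smul] at h1
          rw [← h1]
          congr 1; apply Subtype.ext; exact (TT_smul r w _).symm }
    obtain ⟨q, hq⟩ := hext h
    let Ψ : (M →₀ W) →ₗ[A] A := Finsupp.lsum A (fun m : M =>
      φ ∘ₗ ((q (Finsupp.single m 1)) • W.subtype).restrictScalars A)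
    have hΨs : ∀ m w, Ψ (Finsupp.single m w) = φ (q (Finsupp.single m 1) • (w : S)) := by
      intro m w; simp [Ψ]
    have hΨT : ∀ (w : W) (k : M →₀ R), Ψ (TT W M w k) = φ (q k • (w : S)) := by
      intro w k
      induction k using Finsupp.induction_linear with
      | zero => simp
      | add f g hf hg => simp [hf, hg, add_smul]
      | single m t =>
        rw [TT_single, hΨs, Submodule.coe_smul, ← mul_smul]
        congr 2
        rw [mul_comm, ← smul_eq_mul, ← map_smul]; simp
    refine ⟨Ψ, fun f => ?_⟩
    let X : AddSubmonoid (M →₀ W) :=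
      { carrier := {g | ∃ hg : g ∈ LinearMap.ker μN, Ψ g = ψ ⟨g, hg⟩}
        add_mem' := by
          rintro a b ⟨ha, ha'⟩ ⟨hb, hb'⟩
          exact ⟨add_mem ha hb, by rw [map_add, ha', hb', ← map_add]; rfl⟩
        zero_mem' := ⟨zero_mem _, by rw [map_zero]; exact (map_zero ψ).symm⟩ }
    obtain ⟨r, hr, hr'⟩ := exists_span σ hσ hD X (fun w k hk => ⟨hT' w ⟨k, hk⟩, by
      rw [hΨT]
      have h1 := hh0 ⟨k, hk⟩ w
      rw [h1]
      have h2 := hq ⟨k, hk⟩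
      rw [h2]; rfl⟩) _ huW
    have hru : r = algebraMap A R u := by
      apply hinj
      rw [hr, ← IsScalarTower.algebraMap_apply]
    subst hru
    obtain ⟨h1, h2⟩ := hr' ⟨f.1, congrArg Subtype.val (show μN f.1 = 0 from f.2)⟩
    have e : (algebraMap A R u) • f.1 = u • f.1 := by
      ext m; simp
    have h3 : Ψ (u • f.1) = ψ (u • f) := by
      simp only [e] at h2
      exact h2
    rw [map_smul, map_smul, smul_eq_mul, smul_eq_mul] at h3
    rw [← sub_eq_zero]
    apply hu
    rw [mul_sub, h3, sub_self]
  apply le_antisymm _ hWM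
  intro z hz
  obtain ⟨f, hf⟩ := hs ⟨z, hz⟩
  have : mu W M f = z := congrArg Subtype.val hf
  rw [← this]
  exact mu_mem f

end Core


section Concrete

variable {ι : Type} [Fintype ι] [DecidableEq ι] {p : ι → ℕ} {c0 c1 : ι → ℂ}

/-- image of a monomial in `S`. -/
def mon (p : ι → ℕ) (c0 c1 : ι → ℂ) (m : (ι ⊕ Fin 2) →₀ ℕ) : SAlg ι p c0 c1 :=
  Ideal.Quotient.mk (SIdl ι p c0 c1) (monomial m 1)

lemma mon_add (m m' : (ι ⊕ Fin 2) →₀ ℕ) :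
    mon p c0 c1 (m + m') = mon p c0 c1 m * mon p c0 c1 m' := by
  rw [mon, mon, mon, ← map_mul, monomial_mul, one_mul]

lemma mon_zero : mon p c0 c1 (0 : (ι ⊕ Fin 2) →₀ ℕ) = 1 := by
  rw [mon, ← map_one (Ideal.Quotient.mk (SIdl ι p c0 c1))]; rfl

lemma mon_rel (i : ι) (m : (ι ⊕ Fin 2) →₀ ℕ) :
    mon p c0 c1 (m + Finsupp.single (Sum.inl i) (p i)) =
      c0 i • mon p c0 c1 (m + Finsupp.single (Sum.inr 0) 1) +
      c1 i • mon p c0 c1 (m + Finsupp.single (Sum.inr 1) 1) := by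
  rw [mon_add, mon_add, mon_add, ← mul_smul_comm, ← mul_smul_comm, ← mul_add]
  congr 1
  have h : X (Sum.inl i) ^ (p i) - (C (c0 i) * X (Sum.inr 0) + C (c1 i) * X (Sum.inr 1)) ∈
    SIdl ι p c0 c1 := Ideal.subset_span ⟨i, rfl⟩
  rw [← Ideal.Quotient.mk_eq_mk_iff_sub_mem] at h
  rw [X_pow_eq_monomial, C_mul', C_mul', map_add] at h
  exact h

lemma spoly_span (f : SPoly ι) : f = ∑ m ∈ f.support, coeff m f • monomial m 1 := by
  conv_lhs => rw [f.as_sum]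
  refine Finset.sum_congr rfl fun m _ => ?_
  rw [smul_monomial, smul_eq_mul, mul_one]

lemma S_span (s : SAlg ι p c0 c1) :
    s ∈ Submodule.span ℂ (Set.range (mon p c0 c1)) := by
  obtain ⟨f, rfl⟩ := Ideal.Quotient.mk_surjective s
  rw [spoly_span f, map_sum]
  refine Submodule.sum_mem _ fun m _ => ?_
  exact Submodule.smul_mem _ (coeff m f) (Submodule.subset_span (Set.mem_range_self m))

lemma S_hom_ext {V : Type} [AddCommMonoid V] [Module ℂ V] (F G : SAlg ι p c0 c1 →ₗ[ℂ] V)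
    (h : ∀ m, F (mon p c0 c1 m) = G (mon p c0 c1 m)) (s : SAlg ι p c0 c1) : F s = G s := by
  refine Submodule.span_induction (p := fun s _ => F s = G s) ?_ ?_ ?_ ?_ (S_span s)
  · rintro _ ⟨m, rfl⟩; exact h m
  · simp
  · intro a b _ _ ha hb; simp [ha, hb]
  · intro a b _ hb; simp [hb]

lemma exists_lift {V : Type} [AddCommGroup V] [Module ℂ V]
    (g : ((ι ⊕ Fin 2) →₀ ℕ) → V)
    (h : ∀ i m, g (m + Finsupp.single (Sum.inl i) (p i)) =
      c0 i • g (m + Finsupp.single (Sum.inr 0) 1) + c1 i • g (m + Finsupp.single (Sum.inr 1) 1)) :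
    ∃ F : SAlg ι p c0 c1 →ₗ[ℂ] V, ∀ m, F (mon p c0 c1 m) = g m := by
  let F0 : SPoly ι →ₗ[ℂ] V := (basisMonomials (ι ⊕ Fin 2) ℂ).constr ℂ g
  have hF0 : ∀ m, F0 (monomial m 1) = g m := fun m => by
    have := (basisMonomials (ι ⊕ Fin 2) ℂ).constr_basis ℂ g m
    rwa [coe_basisMonomials] at this
  have hv : (SIdl ι p c0 c1).restrictScalars ℂ ≤ LinearMap.ker F0 := by
    intro f hf
    have key : ∀ f ∈ SIdl ι p c0 c1, ∀ q, F0 (q * f) = 0 := by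
      intro f hf
      refine Submodule.span_induction (p := fun f _ => ∀ q, F0 (q * f) = 0) ?_ ?_ ?_ ?_ hf
      · rintro _ ⟨i, rfl⟩ q
        induction q using MvPolynomial.induction_on' with
        | monomial m a =>
          have : (monomial m a : SPoly ι) = a • monomial m 1 := by simp [smul_monomial]
          rw [this, smul_mul_assoc, map_smul]
          have : (monomial m 1 : SPoly ι) * (X (Sum.inl i) ^ (p i) -
             (C (c0 i) * X (Sum.inr 0) + C (c1 i) * X (Sum.inr 1))) =
             monomial (m + Finsupp.single (Sum.inl i) (p i)) 1 -
              (c0 i • monomial (m + Finsupp.single (Sum.inr 0) 1) 1 +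
               c1 i • monomial (m + Finsupp.single (Sum.inr 1) 1) 1) := by
            rw [C_mul', C_mul', X_pow_eq_monomial, X, X, mul_sub, mul_add, mul_smul_comm,
              mul_smul_comm, monomial_mul, monomial_mul, monomial_mul]; simp
          rw [this, map_sub, map_add, map_smul, map_smul, hF0, hF0, hF0, h, sub_self, smul_zero]
        | add q r hq hr => rw [add_mul, map_add, hq, hr, add_zero]
      · simp
      · intro a b _ _ ha hb q; rw [mul_add, map_add, ha, hb, add_zero]
      · intro a b _ hb q; rw [smul_eq_mul, ← mul_assoc, hb]
    have := key f hf 1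
    rwa [one_mul] at this
  refine ⟨((SIdl ι p c0 c1).restrictScalars ℂ).liftQ F0 hv, fun m => ?_⟩
  exact hF0 m

lemma wtA_add (m m' : (ι ⊕ Fin 2) →₀ ℕ) : wtA p (m + m') = wtA p m + wtA p m' := by
  simp only [wtA, Finsupp.add_apply, add_smul, Finset.sum_add_distrib]; abel

lemma wtA_inl (i : ι) (k : ℕ) : wtA p (Finsupp.single (Sum.inl i) k) = k • egen p i := by
  rw [wtA, Finset.sum_eq_single i] <;> simp +contextual

lemma wtA_inr (j : Fin 2) (k : ℕ) :
    wtA p (Finsupp.single (Sum.inr j : ι ⊕ Fin 2) k) = k • cgen p := by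
  rw [wtA]
  fin_cases j <;> simp [Finsupp.single_apply]

lemma p_egen (i : ι) : p i • egen p i = cgen p := by
  rw [egen, cgen, ← QuotientAddGroup.mk_nsmul, ← sub_eq_zero, ← QuotientAddGroup.mk_sub,
    QuotientAddGroup.eq_zero_iff]
  apply AddSubgroup.subset_closure
  exact ⟨i, by simp⟩

lemma wtA_zero : wtA p 0 = 0 := by simp [wtA]

variable {Q : Type} [AddCommGroup Q] (q : LGroup ι p →+ Q)

variable (c0 c1) in
/-- homogeneous components with respect to a quotient grading. -/
def SG (z : Q) : Submodule ℂ (SAlg ι p c0 c1) :=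
  Submodule.span ℂ (mon p c0 c1 '' {m | q (wtA p m) = z})

lemma mon_mem_SG (m) : mon p c0 c1 m ∈ SG c0 c1 q (q (wtA p m)) :=
  Submodule.subset_span ⟨m, rfl, rfl⟩

lemma mon_mem_SG' (m) (z) (h : q (wtA p m) = z) : mon p c0 c1 m ∈ SG c0 c1 q z :=
  Submodule.subset_span ⟨m, h, rfl⟩

open Classical in
lemma exists_proj (z : Q) : ∃ F : SAlg ι p c0 c1 →ₗ[ℂ] SAlg ι p c0 c1, ∀ m,
    F (mon p c0 c1 m) = if q (wtA p m) = z then mon p c0 c1 m else 0 := by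
  apply exists_lift
  intro i m
  simp only [wtA_add, wtA_inl, wtA_inr, one_smul, p_egen]
  split_ifs
  · exact mon_rel i m
  · simp

variable (c0 c1) in
/-- projection onto a homogeneous component. -/
def pr (z : Q) : SAlg ι p c0 c1 →ₗ[ℂ] SAlg ι p c0 c1 := (exists_proj q z).choose

open Classical in
lemma pr_mon (z : Q) (m) : pr c0 c1 q z (mon p c0 c1 m) =
    if q (wtA p m) = z then mon p c0 c1 m else 0 := (exists_proj q z).choose_spec m

lemma SG_induction {z : Q} {P : SAlg ι p c0 c1 → Prop} (h0 : P 0)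
    (hadd : ∀ a b, P a → P b → P (a + b)) (hsmul : ∀ (t : ℂ) a, P a → P (t • a))
    (hmon : ∀ m, q (wtA p m) = z → P (mon p c0 c1 m)) {s} (hs : s ∈ SG c0 c1 q z) : P s := by
  refine Submodule.span_induction (p := fun s _ => P s) ?_ h0 (fun a b _ _ => hadd a b)
    (fun a b _ => hsmul a b) hs
  rintro _ ⟨m, hm, rfl⟩; exact hmon m hm

lemma S_induction {P : SAlg ι p c0 c1 → Prop} (h0 : P 0)
    (hadd : ∀ a b, P a → P b → P (a + b)) (hsmul : ∀ (t : ℂ) a, P a → P (t • a))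
    (hmon : ∀ m, P (mon p c0 c1 m)) (s) : P s := by
  refine Submodule.span_induction (p := fun s _ => P s) ?_ h0 (fun a b _ _ => hadd a b)
    (fun a b _ => hsmul a b) (S_span s)
  rintro _ ⟨m, rfl⟩; exact hmon m

lemma pr_mem (z : Q) (s) : pr c0 c1 q z s ∈ SG c0 c1 q z := by
  induction s using S_induction with
  | h0 => simp
  | hadd a b ha hb => rw [map_add]; exact add_mem ha hb
  | hsmul t a ha => rw [map_smul]; exact Submodule.smul_mem _ _ ha
  | hmon m => 
    rw [pr_mon]; split_ifs with h
    · exact mon_mem_SG' q m z h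
    · simp

lemma pr_of_mem {z : Q} {s} (hs : s ∈ SG c0 c1 q z) : pr c0 c1 q z s = s := by
  refine SG_induction q (P := fun s => pr c0 c1 q z s = s) ?_ ?_ ?_ ?_ hs
  · simp
  · intro a b ha hb; rw [map_add, ha, hb]
  · intro t a ha; rw [map_smul, ha]
  · intro m hm; rw [pr_mon, if_pos hm]

lemma pr_of_mem_ne {z z' : Q} (h : z ≠ z') {s} (hs : s ∈ SG c0 c1 q z) : pr c0 c1 q z' s = 0 := by
  refine SG_induction q (P := fun s => pr c0 c1 q z' s = 0) ?_ ?_ ?_ ?_ hs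
  · simp
  · intro a b ha hb; rw [map_add, ha, hb, add_zero]
  · intro t a ha; rw [map_smul, ha, smul_zero]
  · intro m hm; rw [pr_mon, if_neg]; rw [hm]; exact h

lemma SG_mul {z w : Q} {s t} (hs : s ∈ SG c0 c1 q z) (ht : t ∈ SG c0 c1 q w) :
    s * t ∈ SG c0 c1 q (z + w) := by
  refine SG_induction q (P := fun s => s * t ∈ SG c0 c1 q (z + w)) ?_ ?_ ?_ ?_ hs
  · simp
  · intro a b ha hb; rw [add_mul]; exact add_mem ha hb
  · intro t a ha; rw [smul_mul_assoc]; exact Submodule.smul_mem _ _ ha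
  · intro m hm
    refine SG_induction q (P := fun t => mon p c0 c1 m * t ∈ SG c0 c1 q (z + w)) ?_ ?_ ?_ ?_ ht
    · simp
    · intro a b ha hb; rw [mul_add]; exact add_mem ha hb
    · intro t a ha; rw [mul_smul_comm]; exact Submodule.smul_mem _ _ ha
    · intro m' hm'
      rw [← mon_add]
      apply mon_mem_SG'
      rw [wtA_add, map_add, hm, hm']

lemma pr_mul (z w : Q) (s) {t} (ht : t ∈ SG c0 c1 q w) :
    pr c0 c1 q (z + w) (s * t) = pr c0 c1 q z s * t := by
  induction s using S_induction with
  | h0 => simp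
  | hadd a b ha hb => rw [add_mul, map_add, map_add, ha, hb, add_mul]
  | hsmul t a ha => rw [smul_mul_assoc, map_smul, map_smul, ha, smul_mul_assoc]
  | hmon m => 
    have h1 := SG_mul q (mon_mem_SG (c0 := c0) (c1 := c1) q m) ht
    rw [pr_mon]; split_ifs with h
    · rw [h] at h1; exact pr_of_mem q h1
    · rw [zero_mul]; refine pr_of_mem_ne q ?_ h1
      intro h'; exact h (add_right_cancel h')

lemma one_mem_SG : (1 : SAlg ι p c0 c1) ∈ SG c0 c1 q 0 := by
  rw [← mon_zero]; apply mon_mem_SG'; rw [wtA_zero, map_zero]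

lemma SCompA_eq (y : LGroup ι p) : SCompA p c0 c1 y = SG c0 c1 (AddMonoidHom.id _) y := by
  apply le_antisymm
  · rintro _ ⟨f, hf, rfl⟩
    change Ideal.Quotient.mk _ f ∈ _
    rw [spoly_span f, map_sum]
    refine Submodule.sum_mem _ fun m hm => ?_
    refine Submodule.smul_mem _ (coeff m f) (mon_mem_SG' _ m y ?_)
    exact hf m (mem_support_iff.1 hm)
  · rw [SG, Submodule.span_le]
    rintro _ ⟨m, hm, rfl⟩
    refine ⟨monomial m 1, ?_, rfl⟩
    intro m' hm'
    rw [coeff_monomial] at hm'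
    by_cases h : m = m'
    · rw [← h]; exact hm
    · simp [h] at hm'

/-- the group `L / ℤ x`. -/
abbrev LQ (x : LGroup ι p) : Type := LGroup ι p ⧸ AddSubgroup.zmultiples x

/-- the quotient map. -/
def qx (x : LGroup ι p) : LGroup ι p →+ LQ x := QuotientAddGroup.mk' _

lemma qx_self (x : LGroup ι p) : qx x x = 0 := by
  simp [qx]

lemma qx_eq (x : LGroup ι p) (z w : LGroup ι p) : qx x z = qx x w ↔ ∃ k : ℤ, z = w + k • x := by
  rw [eq_comm]
  change (QuotientAddGroup.mk w : LQ x) = QuotientAddGroup.mk z ↔ _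
  rw [QuotientAddGroup.eq, AddSubgroup.mem_zmultiples_iff]
  refine exists_congr fun k => ⟨fun h => by rw [h]; abel, fun h => by rw [h]; abel⟩

lemma SShiftA_eq (y x : LGroup ι p) : SShiftA p c0 c1 y x =
    SG c0 c1 (qx x) (qx x y) := by
  rw [SShiftA]
  apply le_antisymm
  · refine iSup_le fun k => ?_
    rw [SCompA_eq, SG, Submodule.span_le]
    rintro _ ⟨m, hm, rfl⟩
    apply mon_mem_SG'
    rw [qx_eq]
    exact ⟨k, hm⟩
  · rw [SG, Submodule.span_le]
    rintro _ ⟨m, hm, rfl⟩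
    obtain ⟨k, hk⟩ := (qx_eq x _ _).1 hm
    refine Submodule.mem_iSup_of_mem k ?_
    rw [SCompA_eq]
    exact mon_mem_SG' _ _ _ hk

lemma SVerA_eq (x : LGroup ι p) : SVerA p c0 c1 x = SG c0 c1 (qx x) (0 : LQ x) := by
  have := SShiftA_eq (c0 := c0) (c1 := c1) 0 x
  rw [SShiftA] at this
  simp only [zero_add, map_zero] at this
  exact this

lemma L_hom_ext {Z : Type} [AddCommGroup Z] (F G : LGroup ι p →+ Z)
    (he : ∀ i, F (egen p i) = G (egen p i)) (hc : F (cgen p) = G (cgen p)) : F = G := by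
  apply QuotientAddGroup.addMonoidHom_ext
  apply AddMonoidHom.functions_ext
  intro i k
  have e : (Pi.single i k : Option ι → ℤ) = k • Pi.single i 1 := by
    rw [← Pi.single_smul]; simp
  rw [e, map_zsmul, map_zsmul]
  congr 1
  cases i with
  | none => exact hc
  | some i => exact he i

lemma exists_deg (hp : ∀ i, 2 ≤ p i) : ∃ d : LGroup ι p →+ ℤ,
    (∀ i, 0 < d (egen p i)) ∧ ∀ z : LGroup ι p, (∏ i, p i) • z = d z • cgen p := by
  let f : (Option ι → ℤ) →+ ℤ :=
    { toFun := fun v => v none * ((∏ i, p i : ℕ) : ℤ) +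
        ∑ i, v (some i) * ((∏ j ∈ Finset.univ.erase i, p j : ℕ) : ℤ)
      map_zero' := by simp
      map_add' := fun v w => by
        simp only [Pi.add_apply, add_mul, Finset.sum_add_distrib]; ring }
  have hf1 : ∀ i, f (Pi.single (some i) 1) = ((∏ j ∈ Finset.univ.erase i, p j : ℕ) : ℤ) := by
    intro i
    change (Pi.single (some i) 1 : Option ι → ℤ) none * _ + ∑ j, _ = _
    rw [Finset.sum_eq_single i] <;> simp +contextual [Pi.single_apply]
  have hf2 : f (Pi.single none 1) = ((∏ j, p j : ℕ) : ℤ) := by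
    change (Pi.single none 1 : Option ι → ℤ) none * _ + ∑ j, _ = _
    simp [Pi.single_apply]
  have hle : LRel ι p ≤ f.ker := by
    rw [LRel, AddSubgroup.closure_le]
    rintro _ ⟨i, rfl⟩
    change f _ = 0
    rw [map_sub, map_zsmul, hf1, hf2, ← Finset.mul_prod_erase _ _ (Finset.mem_univ i)]
    push_cast; simp
  let d : LGroup ι p →+ ℤ := QuotientAddGroup.lift _ f hle
  have hd1 : ∀ i, d (egen p i) = ((∏ j ∈ Finset.univ.erase i, p j : ℕ) : ℤ) := hf1
  have hd2 : d (cgen p) = ((∏ j, p j : ℕ) : ℤ) := hf2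
  refine ⟨d, fun i => ?_, fun z => ?_⟩
  · rw [hd1]
    exact_mod_cast Finset.prod_pos fun j _ => by have := hp j; omega
  · have : (nsmulAddMonoidHom (∏ i, p i) : LGroup ι p →+ LGroup ι p) =
      ((AddMonoidHom.flip (smulAddHom ℤ (LGroup ι p))) (cgen p)).comp d := by
      apply L_hom_ext
      · intro i
        change (∏ i, p i) • egen p i = d (egen p i) • cgen p
        rw [hd1, natCast_zsmul, ← p_egen i, ← mul_smul, mul_comm,
          Finset.mul_prod_erase _ _ (Finset.mem_univ i)]
      · change (∏ i, p i) • cgen p = d (cgen p) • cgen p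
        rw [hd2, natCast_zsmul]
    exact DFunLike.congr_fun this z

lemma tors_facts (hp : ∀ i, 2 ≤ p i) (x : LGroup ι p) (hx0 : x ≠ 0) (hxp : x ∈ Lplus p) :
    (∀ k : ℤ, k • x = 0 → k = 0) ∧ ∃ E : ℕ, 0 < E ∧ ∀ z : LQ x, E • z = 0 := by
  obtain ⟨d, hd, hd'⟩ := exists_deg hp
  have hdx : x = 0 ∨ 0 < d x := by
    refine AddSubmonoid.closure_induction (motive := fun x _ => x = 0 ∨ 0 < d x) ?_ ?_ ?_ hxp
    · rintro _ ⟨i, rfl⟩; exact Or.inr (hd i)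
    · exact Or.inl rfl
    · rintro a b _ _ (rfl | ha) (rfl | hb)
      · simp
      · simpa using Or.inr hb
      · simpa using Or.inr ha
      · right; rw [map_add]; exact add_pos ha hb
  have hdx : 0 < d x := hdx.resolve_left hx0
  refine ⟨fun k hk => ?_, (d x).toNat * ∏ i, p i, ?_, fun z => ?_⟩
  · have := congrArg d hk
    rw [map_zsmul, map_zero, smul_eq_mul] at this
    rcases mul_eq_zero.1 this with h | h
    · exact h
    · exact absurd h hdx.ne'
  · apply Nat.mul_pos
    · omega
    · exact Finset.prod_pos fun j _ => by have := hp j; omega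
  · obtain ⟨z, rfl⟩ := QuotientAddGroup.mk_surjective z
    change _ • qx x z = 0
    rw [← map_nsmul, ← map_zero (qx x), qx_eq]
    refine ⟨d z * ((∏ i, p i : ℕ) : ℤ), ?_⟩
    rw [mul_smul, mul_smul, natCast_zsmul, hd' z, hd' x, zero_add, ← natCast_zsmul,
      Int.toNat_of_nonneg hdx.le, ← mul_smul, ← mul_smul, mul_comm]

variable (p c0 c1) in
/-- the structure map `ℂ[X₀,X₁] → S`, `X_j ↦ t_j ^ K`. -/
def aA (K : ℕ) : MvPolynomial (Fin 2) ℂ →ₐ[ℂ] SAlg ι p c0 c1 :=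
  aeval fun j => mon p c0 c1 (Finsupp.single (Sum.inr j) K)

lemma aA_X (K : ℕ) (j : Fin 2) :
    aA p c0 c1 K (X j) = mon p c0 c1 (Finsupp.single (Sum.inr j) K) := by
  simp [aA]

lemma aA_mem (K : ℕ) (hK : K • q (cgen p) = 0) (a) : aA p c0 c1 K a ∈ SG c0 c1 q 0 := by
  induction a using MvPolynomial.induction_on with
  | C t =>
    rw [← algebraMap_eq, AlgHom.commutes, Algebra.algebraMap_eq_smul_one]
    exact Submodule.smul_mem _ _ (one_mem_SG q)
  | add a b ha hb => rw [map_add]; exact add_mem ha hb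
  | mul_X a j ha =>
    rw [map_mul, aA_X, ← add_zero (0 : Q)]
    refine SG_mul q ha (mon_mem_SG' q _ _ ?_)
    rw [wtA_inr, map_nsmul, hK]

/-- one-variable factor. -/
def hfac {Z : Type} [CommRing Z] (P : ℕ) (l : Z) (k : ℕ) : Z :=
  if k % P = P - 1 then l ^ (k / P) else 0

lemma hfac_add {Z : Type} [CommRing Z] (P : ℕ) (hP : 0 < P) (l : Z) (k : ℕ) :
    hfac P l (k + P) = l * hfac P l k := by
  simp only [hfac, Nat.add_mod_right, Nat.add_div_right k hP]
  split_ifs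
  · rw [pow_succ, mul_comm]
  · simp

lemma hfac_dual {Z : Type} [CommRing Z] (P : ℕ) (l : Z) (b b' : ℕ) (hb : b < P) (hb' : b' < P) :
    hfac P l (b + (P - 1 - b')) = if b = b' then 1 else 0 := by
  rw [hfac]
  rcases lt_trichotomy b b' with h | h | h
  · rw [Nat.mod_eq_of_lt (by omega), if_neg (by omega), if_neg (by omega)]
  · subst h
    have e : b + (P - 1 - b) = P - 1 := by omega
    rw [e, Nat.mod_eq_of_lt (by omega), Nat.div_eq_of_lt (by omega)]; simp
  · have e : b + (P - 1 - b') = (b - b' - 1) + P := by omega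
    rw [e, Nat.add_mod_right, Nat.mod_eq_of_lt (by omega), if_neg (by omega), if_neg (by omega)]

lemma exists_phi2 (K : ℕ) (hK : 0 < K) :
    ∃ F : MvPolynomial (Fin 2) ℂ →ₗ[ℂ] MvPolynomial (Fin 2) ℂ,
      (∀ a b, F (X 0 ^ a * X 1 ^ b) = hfac K (X 0) a * hfac K (X 1) b) ∧
      (∀ j f, F (X j ^ K * f) = X j * F f) := by
  let F : MvPolynomial (Fin 2) ℂ →ₗ[ℂ] MvPolynomial (Fin 2) ℂ :=
    (basisMonomials (Fin 2) ℂ).constr ℂ (fun s => hfac K (X 0) (s 0) * hfac K (X 1) (s 1))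
  have hF : ∀ m, F (monomial m 1) = hfac K (X 0) (m 0) * hfac K (X 1) (m 1) := fun m => by
    have := (basisMonomials (Fin 2) ℂ).constr_basis ℂ
      (fun s => (hfac K (X 0) (s 0) * hfac K (X 1) (s 1) : MvPolynomial (Fin 2) ℂ)) m
    rwa [coe_basisMonomials] at this
  refine ⟨F, fun a b => ?_, fun j f => ?_⟩
  · rw [X_pow_eq_monomial, X_pow_eq_monomial, monomial_mul, one_mul, hF]
    simp
  · induction f using MvPolynomial.induction_on' with
    | monomial m a =>
      have : (monomial m a : MvPolynomial (Fin 2) ℂ) = a • monomial m 1 := by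
        simp [smul_monomial]
      rw [this, mul_smul_comm, map_smul, map_smul, mul_smul_comm, X_pow_eq_monomial, monomial_mul,
        one_mul, hF, hF]
      congr 1
      fin_cases j
      · simp only [Fin.zero_eta, Finsupp.add_apply, Finsupp.single_apply]
        simp [add_comm K, hfac_add K hK]; ring
      · simp only [Fin.mk_one, Finsupp.add_apply, Finsupp.single_apply]
        simp [add_comm K, hfac_add K hK]; ring
    | add f g hf hg => rw [mul_add, map_add, hf, hg, map_add, mul_add]

lemma exists_phi0 (hp : ∀ i, 2 ≤ p i) (K : ℕ) (hK : 0 < K) :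
    ∃ F : SAlg ι p c0 c1 →ₗ[ℂ] MvPolynomial (Fin 2) ℂ,
      (∀ a s, F (aA p c0 c1 K a * s) = a * F s) ∧
      (∀ b b' : ∀ k : ι ⊕ Fin 2, Fin (Sum.elim p (fun _ => K) k),
        F (mon p c0 c1 (Finsupp.equivFunOnFinite.symm
          (fun k => (b k : ℕ) + (Sum.elim p (fun _ => K) k - 1 - (b' k : ℕ))))) =
          if b = b' then 1 else 0) := by
  obtain ⟨F2, h1, h2⟩ := exists_phi2 K hK
  let G : ((ι ⊕ Fin 2) →₀ ℕ) → MvPolynomial (Fin 2) ℂ := fun m =>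
    (∏ i, hfac (p i) (c0 i • X 0 + c1 i • X 1) (m (Sum.inl i))) *
      (X 0 ^ m (Sum.inr 0) * X 1 ^ m (Sum.inr 1))
  have hGt : ∀ m j k, G (m + Finsupp.single (Sum.inr j) k) = X j ^ k * G m := by
    intro m j k
    fin_cases j <;> simp [G, pow_add] <;> ring
  have hGx : ∀ m i, G (m + Finsupp.single (Sum.inl i) (p i)) =
      (c0 i • X 0 + c1 i • X 1) * G m := by
    intro m i
    have hz : (m + Finsupp.single (Sum.inl i) (p i) : (ι ⊕ Fin 2) →₀ ℕ) (Sum.inl i) = m (Sum.inl i) + p i := by simp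
    have hz' : ∀ l ∈ Finset.univ.erase i, hfac (p l) (c0 l • X 0 + c1 l • X 1)
      ((m + Finsupp.single (Sum.inl i) (p i) : (ι ⊕ Fin 2) →₀ ℕ) (Sum.inl l)) =
       (hfac (p l) (c0 l • X 0 + c1 l • X 1) (m (Sum.inl l)) : MvPolynomial (Fin 2) ℂ) := by
      intro l hl
      have : i ≠ l := (Finset.ne_of_mem_erase hl).symm
      simp [Finsupp.single_apply, this]
    simp only [G]
    rw [← Finset.mul_prod_erase _ _ (Finset.mem_univ i), Finset.prod_congr rfl hz', hz,
      hfac_add _ (by have := hp i; omega), ← Finset.mul_prod_erase _ _ (Finset.mem_univ i)]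
    simp
    ring
  obtain ⟨F, hF⟩ := exists_lift (p := p) (c0 := c0) (c1 := c1) (fun m => F2 (G m)) (by
    intro i m
    simp only [hGx, hGt, pow_one, ← map_smul, ← map_add]
    congr 1
    rw [add_mul, smul_mul_assoc, smul_mul_assoc])
  refine ⟨F, fun a s => ?_, fun b b' => ?_⟩
  · have key : ∀ j s, F (mon p c0 c1 (Finsupp.single (Sum.inr j) K) * s) = X j * F s := by
      intro j s
      induction s using S_induction with
      | h0 => simp
      | hadd a b ha hb => rw [mul_add, map_add, map_add, ha, hb, mul_add]
      | hsmul t a ha => rw [mul_smul_comm, map_smul, map_smul, ha, mul_smul_comm]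
      | hmon m => rw [← mon_add, hF, hF, add_comm, hGt, h2]
    induction a using MvPolynomial.induction_on generalizing s with
    | C t =>
      rw [← algebraMap_eq, AlgHom.commutes, Algebra.algebraMap_eq_smul_one,
        Algebra.algebraMap_eq_smul_one, smul_mul_assoc, one_mul, map_smul, smul_mul_assoc, one_mul]
    | add a b ha hb => rw [map_add, add_mul, map_add, ha, hb, add_mul]
    | mul_X a j ha => rw [map_mul (aA p c0 c1 K), aA_X, mul_assoc, ha, key, mul_assoc]
  · rw [hF]
    simp only [G, Finsupp.equivFunOnFinite_symm_apply_apply, Sum.elim_inl, Sum.elim_inr]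
    have e : ∀ i, (hfac (p i) (c0 i • X 0 + c1 i • X 1)
      ((b (Sum.inl i) : ℕ) + (p i - 1 - (b' (Sum.inl i) : ℕ))) : MvPolynomial (Fin 2) ℂ) =
        if (b (Sum.inl i) : ℕ) = (b' (Sum.inl i) : ℕ) then 1 else 0 := fun i =>
      hfac_dual _ _ _ _ (b (Sum.inl i)).2 (b' (Sum.inl i)).2
    simp only [e]
    by_cases hbb : ∀ i, (b (Sum.inl i) : ℕ) = (b' (Sum.inl i) : ℕ)
    · simp only [hbb, if_true, Finset.prod_const_one, one_mul, h1]
      rw [hfac_dual K (X 0) _ _ (b (Sum.inr 0)).2 (b' (Sum.inr 0)).2,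
        hfac_dual K (X 1) _ _ (b (Sum.inr 1)).2 (b' (Sum.inr 1)).2]
      have : b = b' ↔ (b (Sum.inr 0) : ℕ) = (b' (Sum.inr 0) : ℕ) ∧
         (b (Sum.inr 1) : ℕ) = (b' (Sum.inr 1) : ℕ) := by
        constructor
        · rintro rfl; simp
        · rintro ⟨ha, hb⟩
          funext k
          apply Fin.ext
          rcases k with i | j
          · exact hbb i
          · fin_cases j
            · exact ha
            · exact hb
      simp only [this]
      split_ifs <;> simp_all
    · push Not at hbb
      obtain ⟨i, hi⟩ := hbb
      rw [Finset.prod_eq_zero (Finset.mem_univ i) (if_neg hi), zero_mul, map_zero, if_neg]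
      rintro rfl; exact hi rfl

lemma S_span_A (hp : ∀ i, 2 ≤ p i) (K : ℕ) (hK : 0 < K) (s : SAlg ι p c0 c1) :
    ∃ a : (∀ k : ι ⊕ Fin 2, Fin (Sum.elim p (fun _ => K) k)) → MvPolynomial (Fin 2) ℂ,
      s = ∑ b, aA p c0 c1 K (a b) *
        mon p c0 c1 (Finsupp.equivFunOnFinite.symm (fun k => (b k : ℕ))) := by
  have hadd : ∀ s t : SAlg ι p c0 c1, (∃ a : (∀ k : ι ⊕ Fin 2, Fin (Sum.elim p (fun _ => K) k)) → MvPolynomial (Fin 2) ℂ,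
      s = ∑ b, aA p c0 c1 K (a b) *
        mon p c0 c1 (Finsupp.equivFunOnFinite.symm (fun k => (b k : ℕ)))) → 
      (∃ a : (∀ k : ι ⊕ Fin 2, Fin (Sum.elim p (fun _ => K) k)) → MvPolynomial (Fin 2) ℂ,
      t = ∑ b, aA p c0 c1 K (a b) *
        mon p c0 c1 (Finsupp.equivFunOnFinite.symm (fun k => (b k : ℕ)))) →
      (∃ a : (∀ k : ι ⊕ Fin 2, Fin (Sum.elim p (fun _ => K) k)) → MvPolynomial (Fin 2) ℂ,
      s + t = ∑ b, aA p c0 c1 K (a b) *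
        mon p c0 c1 (Finsupp.equivFunOnFinite.symm (fun k => (b k : ℕ)))) := by
    rintro s t ⟨a, rfl⟩ ⟨b, rfl⟩
    refine ⟨a + b, ?_⟩
    rw [← Finset.sum_add_distrib]
    refine Finset.sum_congr rfl fun k _ => ?_
    rw [Pi.add_apply, map_add, add_mul]
  have hmul : ∀ (c) (s : SAlg ι p c0 c1), (∃ a : (∀ k : ι ⊕ Fin 2, Fin (Sum.elim p (fun _ => K) k)) → MvPolynomial (Fin 2) ℂ,
      s = ∑ b, aA p c0 c1 K (a b) *
        mon p c0 c1 (Finsupp.equivFunOnFinite.symm (fun k => (b k : ℕ)))) → 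
      (∃ a : (∀ k : ι ⊕ Fin 2, Fin (Sum.elim p (fun _ => K) k)) → MvPolynomial (Fin 2) ℂ,
      aA p c0 c1 K c * s = ∑ b, aA p c0 c1 K (a b) *
        mon p c0 c1 (Finsupp.equivFunOnFinite.symm (fun k => (b k : ℕ)))) := by
    rintro c s ⟨a, rfl⟩
    refine ⟨fun k => c * a k, ?_⟩
    rw [Finset.mul_sum]
    refine Finset.sum_congr rfl fun k _ => ?_
    rw [map_mul, mul_assoc]
  have hsmul : ∀ (c : ℂ) (s : SAlg ι p c0 c1), c • s = aA p c0 c1 K (C c) * s := by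
    intro c s
    rw [← algebraMap_eq, AlgHom.commutes, Algebra.algebraMap_eq_smul_one, smul_mul_assoc, one_mul]
  induction s using S_induction with
  | h0 => exact ⟨0, by simp⟩
  | hadd s t hs ht => exact hadd s t hs ht
  | hsmul t s hs => rw [hsmul]; exact hmul _ _ hs
  | hmon m =>
    induction hd : m.degree using Nat.strong_induction_on generalizing m with
    | _ d ih =>
    by_cases hb : ∀ k, m k < Sum.elim p (fun _ => K) k
    · refine ⟨Pi.single (fun k => ⟨m k, hb k⟩) 1, ?_⟩
      rw [Finset.sum_eq_single (fun k => ⟨m k, hb k⟩)]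
      · rw [Pi.single_eq_same, map_one, one_mul]
        congr 1
        ext k; simp
      · intro b _ hne
        rw [Pi.single_eq_of_ne hne]; simp
      · intro h; exact absurd (Finset.mem_univ _) h
    · push Not at hb
      obtain ⟨k, hk⟩ := hb
      obtain ⟨m', rfl⟩ : ∃ m', m = m' + Finsupp.single k (Sum.elim p (fun _ => K) k) := by
        refine ⟨m - Finsupp.single k (Sum.elim p (fun _ => K) k), ?_⟩
        rw [tsub_add_cancel_of_le]
        rwa [Finsupp.single_le_iff]
      rw [map_add, Finsupp.degree_single] at hd
      rcases k with i | j
      · simp only [Sum.elim_inl] at hd ⊢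
        have := hp i
        rw [mon_rel, hsmul, hsmul]
        apply hadd
        · apply hmul
          refine ih _ ?_ _ rfl
          rw [map_add, Finsupp.degree_single]; omega
        · apply hmul
          refine ih _ ?_ _ rfl
          rw [map_add, Finsupp.degree_single]; omega
      · simp only [Sum.elim_inr] at hd ⊢
        rw [mon_add, mul_comm, ← aA_X]
        apply hmul
        refine ih _ ?_ _ rfl
        omega

/-- Frobenius form compatible with the grading. -/
lemma exists_frob (hp : ∀ i, 2 ≤ p i) (K : ℕ) (hK : 0 < K) (hKq : K • q (cgen p) = 0)
    (ω : LGroup ι p) (hω : ω = ((Fintype.card ι : ℤ) - 2) • cgen p - ∑ i, egen p i) :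
    ∃ (β : Type) (_ : Fintype β) (B B' : β → SAlg ι p c0 c1)
      (F : SAlg ι p c0 c1 →ₗ[ℂ] MvPolynomial (Fin 2) ℂ),
      (∀ a s, F (aA p c0 c1 K a * s) = a * F s) ∧ (∀ s, F (pr c0 c1 q (q ω) s) = F s) ∧
      (∀ s, s = ∑ b, aA p c0 c1 K (F (s * B' b)) * B b) := by
  obtain ⟨F, hF1, hF2⟩ := exists_phi0 (c0 := c0) (c1 := c1) hp K hK
  let B : (∀ k : ι ⊕ Fin 2, Fin (Sum.elim p (fun _ => K) k)) → SAlg ι p c0 c1 := fun b =>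
    mon p c0 c1 (Finsupp.equivFunOnFinite.symm (fun k => (b k : ℕ)))
  let B' : (∀ k : ι ⊕ Fin 2, Fin (Sum.elim p (fun _ => K) k)) → SAlg ι p c0 c1 := fun b =>
    mon p c0 c1 (Finsupp.equivFunOnFinite.symm
      (fun k => (Sum.elim p (fun _ => K) k - 1 - (b k : ℕ))))
  have hBB : ∀ b b', B b * B' b' = mon p c0 c1 (Finsupp.equivFunOnFinite.symm
          (fun k => (b k : ℕ) + (Sum.elim p (fun _ => K) k - 1 - (b' k : ℕ)))) := by
    intro b b'
    simp only [B, B']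
    rw [← mon_add]
    congr 1
    ext k
    simp
  have hdeg : ∀ b : (∀ k : ι ⊕ Fin 2, Fin (Sum.elim p (fun _ => K) k)),
     q (wtA p (Finsupp.equivFunOnFinite.symm
          (fun k => (b k : ℕ) + (Sum.elim p (fun _ => K) k - 1 - (b k : ℕ))))) = q ω := by
    intro b
    have e1 : ∀ i, (b (Sum.inl i) : ℕ) + (p i - 1 - (b (Sum.inl i) : ℕ)) = p i - 1 := fun i => by
      have : (b (Sum.inl i) : ℕ) < p i := (b (Sum.inl i)).2
      omega
    have e2 : ∀ j, (b (Sum.inr j) : ℕ) + (K - 1 - (b (Sum.inr j) : ℕ)) = K - 1 := fun j => by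
      have : (b (Sum.inr j) : ℕ) < K := (b (Sum.inr j)).2
      omega
    have e3 : ∀ i, (p i - 1) • egen p i = cgen p - egen p i := fun i => by
      rw [eq_sub_iff_add_eq, ← succ_nsmul, ← p_egen i]
      congr 1; have := hp i; omega
    have e4 : wtA p (Finsupp.equivFunOnFinite.symm
          (fun k => (b k : ℕ) + (Sum.elim p (fun _ => K) k - 1 - (b k : ℕ)))) =
          ω + (K + K) • cgen p := by
      simp only [wtA, Finsupp.equivFunOnFinite_symm_apply_apply, Sum.elim_inl, Sum.elim_inr, e1, e2,
        e3, Finset.sum_sub_distrib, Finset.sum_const, Finset.card_univ, hω]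
      have : (K - 1 + (K - 1)) • cgen p = (K + K) • cgen p - (2 : ℤ) • cgen p := by
        rw [← natCast_zsmul, ← natCast_zsmul, ← sub_smul]
        congr 1
        omega
      rw [this, sub_smul, natCast_zsmul]
      abel
    rw [e4, map_add, map_nsmul, add_smul, hKq]; simp
  refine ⟨(∀ k : ι ⊕ Fin 2, Fin (Sum.elim p (fun _ => K) k)), inferInstance, B, B',
    F ∘ₗ pr c0 c1 q (q ω), ?_, ?_, ?_⟩
  · intro a s
    have := pr_mul (c0 := c0) (c1 := c1) q (q ω) 0 s (aA_mem q K hKq a)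
    rw [add_zero] at this
    rw [LinearMap.comp_apply, LinearMap.comp_apply, mul_comm (aA p c0 c1 K a), this, mul_comm, hF1]
  · intro s
    rw [LinearMap.comp_apply, LinearMap.comp_apply, pr_of_mem q (pr_mem q _ _)]
  · intro s
    have hdual : ∀ b b', (F ∘ₗ pr c0 c1 q (q ω)) (B b * B' b') = if b = b' then 1 else 0 := by
      intro b b'
      rw [hBB, LinearMap.comp_apply, pr_mon]
      by_cases h : b = b'
      · subst h
        rw [if_pos (hdeg b), hF2]
      · split_ifs
        · rw [hF2, if_neg h]
        · simp
    have hlin : ∀ a s, (F ∘ₗ pr c0 c1 q (q ω)) (aA p c0 c1 K a * s) =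
        a * (F ∘ₗ pr c0 c1 q (q ω)) s := by
      intro a s
      have := pr_mul (c0 := c0) (c1 := c1) q (q ω) 0 s (aA_mem q K hKq a)
      rw [add_zero] at this
      rw [LinearMap.comp_apply, LinearMap.comp_apply, mul_comm (aA p c0 c1 K a), this, mul_comm,
        hF1]
    obtain ⟨a, ha⟩ := S_span_A hp K hK s
    have ha : s = ∑ b, aA p c0 c1 K (a b) * B b := ha
    have hc : ∀ b', (F ∘ₗ pr c0 c1 q (q ω)) (s * B' b') = a b' := by
      intro b'
      conv_lhs => rw [ha, Finset.sum_mul, map_sum]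
      rw [Finset.sum_eq_single b']
      · rw [mul_assoc, hlin, hdual, if_pos rfl, mul_one]
      · intro b _ hb
        rw [mul_assoc, hlin, hdual, if_neg hb, mul_zero]
      · intro h; exact absurd (Finset.mem_univ _) h
    simp only [hc]
    exact ha

lemma prime_arg (hp : ∀ i, 2 ≤ p i)
    (hdist : ∀ i j : ι, i ≠ j → c0 i * c1 j ≠ c1 i * c0 j)
    (a : ι → ℕ) (aZ : ℤ) (hx : q ((∑ i, a i • egen p i) + aZ • cgen p) = 0)
    (hgcd : ∀ i, Nat.gcd (p i) (a i) = 1)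
    (E : ℕ) (hE0 : 0 < E) (hE : ∀ z : Q, E • z = 0)
    (𝔮 : Ideal (SAlg ι p c0 c1)) [h𝔮 : 𝔮.IsPrime] (j : Fin 2)
    (hj : mon p c0 c1 (Finsupp.single (Sum.inr j) 1) ∉ 𝔮) (w : LGroup ι p) :
    ∃ f ∈ SG c0 c1 q (q w), f ∉ 𝔮 := by
  let T : AddSubgroup Q :=
    { carrier := {z | ∃ f ∈ SG c0 c1 q z, f ∉ 𝔮}
      zero_mem' := ⟨1, one_mem_SG q, fun h => h𝔮.ne_top ((Ideal.eq_top_iff_one _).2 h)⟩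
      add_mem' := by
        rintro z w ⟨f, hf, hf'⟩ ⟨g, hg, hg'⟩
        exact ⟨f * g, SG_mul q hf hg, fun h => (h𝔮.mem_or_mem h).elim hf' hg'⟩
      neg_mem' := by
        rintro z ⟨f, hf, hf'⟩
        have key : ∀ k : ℕ, f ^ k ∈ SG c0 c1 q (k • z) := by
          intro k
          induction k with
          | zero => simpa using one_mem_SG q
          | succ k ih => rw [pow_succ, succ_nsmul]; exact SG_mul q ih hf
        refine ⟨f ^ (E - 1), ?_, fun h => hf' (h𝔮.mem_of_pow_mem _ h)⟩
        have e : -z = (E - 1) • z := by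
          rw [neg_eq_iff_add_eq_zero, ← succ_nsmul', Nat.sub_add_cancel hE0, hE]
        rw [e]; exact key _ }
  have hT : ∀ z, z ∈ T ↔ ∃ f ∈ SG c0 c1 q z, f ∉ 𝔮 := fun z => Iff.rfl
  have hc : q (cgen p) ∈ T := by
    refine ⟨_, mon_mem_SG' q _ _ ?_, hj⟩
    rw [wtA_inr, one_smul]
  have hxi : ∀ i, mon p c0 c1 (Finsupp.single (Sum.inl i) 1) ∉ 𝔮 → q (egen p i) ∈ T := by
    intro i hi
    refine ⟨_, mon_mem_SG' q _ _ ?_, hi⟩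
    rw [wtA_inl, one_smul]
  have hpow : ∀ i, mon p c0 c1 (Finsupp.single (Sum.inl i) 1) ∈ 𝔮 →
      c0 i • mon p c0 c1 (Finsupp.single (Sum.inr 0) 1) +
      c1 i • mon p c0 c1 (Finsupp.single (Sum.inr 1) 1) ∈ 𝔮 := by
    intro i hi
    have h1 := mon_rel (p := p) (c0 := c0) (c1 := c1) i 0
    rw [zero_add, zero_add, zero_add] at h1
    rw [← h1]
    obtain ⟨k, hk⟩ : ∃ k, p i = k + 1 := ⟨p i - 1, by have := hp i; omega⟩
    rw [hk, Finsupp.single_add, mon_add]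
    exact Ideal.mul_mem_left _ _ hi
  have hsm : ∀ (t : ℂ) (s : SAlg ι p c0 c1), s ∈ 𝔮 → t • s ∈ 𝔮 := by
    intro t s hs
    rw [← one_mul s, ← smul_mul_assoc]
    exact Ideal.mul_mem_left _ _ hs
  have htwo : ∀ i l, i ≠ l → mon p c0 c1 (Finsupp.single (Sum.inl i) 1) ∈ 𝔮 →
      mon p c0 c1 (Finsupp.single (Sum.inl l) 1) ∉ 𝔮 := by
    intro i l hil hi hl
    apply hj
    have h1 := hpow i hi
    have h2 := hpow l hl
    have hd : c0 i * c1 l - c1 i * c0 l ≠ 0 := sub_ne_zero.2 (hdist i l hil)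
    have h3 : (c0 i * c1 l - c1 i * c0 l) • mon p c0 c1 (Finsupp.single (Sum.inr j) 1) ∈ 𝔮 := by
      fin_cases j
      · have := sub_mem (hsm (c1 l) _ h1) (hsm (c1 i) _ h2)
        convert this using 1
        simp only [Fin.zero_eta]
        module
      · have := sub_mem (hsm (c0 i) _ h2) (hsm (c0 l) _ h1)
        convert this using 1
        simp only [Fin.mk_one]
        module
    have := hsm (c0 i * c1 l - c1 i * c0 l)⁻¹ _ h3
    rwa [← mul_smul, inv_mul_cancel₀ hd, one_smul] at this
  have he : ∀ i, q (egen p i) ∈ T := by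
    intro i
    by_cases hi : mon p c0 c1 (Finsupp.single (Sum.inl i) 1) ∈ 𝔮
    · have hl : ∀ l ≠ i, q (egen p l) ∈ T := fun l hl => hxi l (htwo i l hl.symm hi)
      have hai : a i • q (egen p i) ∈ T := by
        rw [← Finset.add_sum_erase _ _ (Finset.mem_univ i), add_assoc, map_add, map_nsmul,
          map_add, map_sum, map_zsmul] at hx
        rw [eq_neg_of_add_eq_zero_left hx]
        refine neg_mem (add_mem (sum_mem fun l hl' => ?_) (zsmul_mem hc _))
        rw [map_nsmul]
        exact nsmul_mem (hl l (Finset.ne_of_mem_erase hl')) _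
      have hpi : p i • q (egen p i) ∈ T := by
        rw [← map_nsmul, p_egen]; exact hc
      have hb := Nat.gcd_eq_gcd_ab (p i) (a i)
      rw [hgcd] at hb
      rw [← one_zsmul (q (egen p i)), show (1 : ℤ) = ((1 : ℕ) : ℤ) by rfl, hb, add_smul, mul_comm,
        mul_comm (a i : ℤ), mul_smul, mul_smul, natCast_zsmul, natCast_zsmul]
      exact add_mem (zsmul_mem hpi _) (zsmul_mem hai _)
    · exact hxi i hi
  have htop : (QuotientAddGroup.mk' T).comp q = 0 := by
    apply L_hom_ext
    · intro i
      exact (QuotientAddGroup.eq_zero_iff _).2 (he i)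
    · exact (QuotientAddGroup.eq_zero_iff _).2 hc
  exact (hT _).1 ((QuotientAddGroup.eq_zero_iff _).1 (DFunLike.congr_fun htop w))

lemma exists_K (hp : ∀ i, 2 ≤ p i)
    (hdist : ∀ i j : ι, i ≠ j → c0 i * c1 j ≠ c1 i * c0 j)
    (a : ι → ℕ) (aZ : ℤ) (hx : q ((∑ i, a i • egen p i) + aZ • cgen p) = 0)
    (hgcd : ∀ i, Nat.gcd (p i) (a i) = 1)
    (E : ℕ) (hE0 : 0 < E) (hE : ∀ z : Q, E • z = 0) (w : LGroup ι p) :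
    ∃ K : ℕ, 0 < K ∧ K • q (cgen p) = 0 ∧ ∀ j : Fin 2,
      mon p c0 c1 (Finsupp.single (Sum.inr j) K) ∈
        SG c0 c1 q (q w) * SG c0 c1 q (q (-w)) := by
  let J : Ideal (SAlg ι p c0 c1) := Ideal.span
    {z | ∃ f ∈ SG c0 c1 q (q w), ∃ g ∈ SG c0 c1 q (q (-w)), z = f * g}
  have hrad : ∀ j : Fin 2, mon p c0 c1 (Finsupp.single (Sum.inr j) 1) ∈ J.radical := by
    intro j
    rw [Ideal.radical_eq_sInf, Ideal.mem_sInf]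
    rintro 𝔮 ⟨hJ, h𝔮⟩
    by_contra hj
    obtain ⟨f, hf, hf'⟩ := prime_arg q hp hdist a aZ hx hgcd E hE0 hE 𝔮 j hj w
    obtain ⟨g, hg, hg'⟩ := prime_arg q hp hdist a aZ hx hgcd E hE0 hE 𝔮 j hj (-w)
    have : f * g ∈ 𝔮 := hJ (Ideal.subset_span ⟨f, hf, g, hg, rfl⟩)
    exact (h𝔮.mem_or_mem this).elim hf' hg'
  choose N hN using hrad
  have hJ : ∀ z ∈ J, ∀ s, pr c0 c1 q 0 (s * z) ∈ SG c0 c1 q (q w) * SG c0 c1 q (q (-w)) := by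
    intro z hz
    refine Submodule.span_induction (p := fun z _ => ∀ s, pr c0 c1 q 0 (s * z) ∈
      SG c0 c1 q (q w) * SG c0 c1 q (q (-w))) ?_ ?_ ?_ ?_ hz
    · rintro _ ⟨f, hf, g, hg, rfl⟩ s
      have h0 : f * g ∈ SG c0 c1 q 0 := by
        have := SG_mul q hf hg
        rwa [← map_add, add_neg_cancel, map_zero] at this
      have h1 := pr_mul q 0 0 s h0
      rw [add_zero] at h1
      rw [h1, ← mul_assoc]
      refine Submodule.mul_mem_mul ?_ hg
      have := SG_mul q (pr_mem q 0 s) hf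
      rwa [zero_add] at this
    · intro s; simp
    · intro a b _ _ ha hb s
      rw [mul_add, map_add]; exact add_mem (ha s) (hb s)
    · intro a b _ hb s
      rw [smul_eq_mul, ← mul_assoc]; exact hb _
  have hmp : ∀ (j : Fin 2) (k : ℕ), mon p c0 c1 (Finsupp.single (Sum.inr j) k) =
      mon p c0 c1 (Finsupp.single (Sum.inr j) 1) ^ k := by
    intro j k
    induction k with
    | zero => simp [mon_zero]
    | succ k ih => rw [Finsupp.single_add, mon_add, ih, pow_succ]
  have hKc : (E * (N 0 + N 1 + 1)) • q (cgen p) = 0 := by rw [mul_smul, hE]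
  refine ⟨E * (N 0 + N 1 + 1), by positivity, hKc, fun j => ?_⟩
  have h1 : mon p c0 c1 (Finsupp.single (Sum.inr j) (E * (N 0 + N 1 + 1))) ∈ SG c0 c1 q 0 := by
    apply mon_mem_SG'
    rw [wtA_inr, map_nsmul, hKc]
  have h2 : mon p c0 c1 (Finsupp.single (Sum.inr j) (E * (N 0 + N 1 + 1))) ∈ J := by
    rw [hmp]
    refine Ideal.pow_mem_of_pow_mem _ (hN j) ?_
    have : N j ≤ N 0 + N 1 + 1 := by fin_cases j <;> simp <;> omega
    calc N j ≤ 1 * (N 0 + N 1 + 1) := by omega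
      _ ≤ _ := Nat.mul_le_mul_right _ hE0
  have := hJ _ h2 1
  rwa [one_mul, pr_of_mem q h1] at this

end Concrete

lemma comp_abs {S L : Type} [CommRing S] [Algebra ℂ S] [AddCommGroup L]
    (C : L → Submodule ℂ S) (x : L) (hx : ∀ k : ℤ, k • x = 0 → k = 0)
    (P : L → S →ₗ[ℂ] S) (hP1 : ∀ z, ∀ f ∈ C z, P z f = f)
    (hP2 : ∀ z z', z ≠ z' → ∀ f ∈ C z, P z' f = 0)
    (hC : ∀ z w, ∀ f ∈ C z, ∀ g ∈ C w, f * g ∈ C (z + w)) (y ω : L) :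
    (⨆ k : ℤ, C (y + ω + k • x)) = (⨆ k : ℤ, C (ω + k • x)) * (⨆ k : ℤ, C (y + k • x)) ↔
    ∀ ℓ : ℤ, C (y + ω + ℓ • x) = ⨆ m : ℤ, C (ω + m • x) * C (y + (ℓ - m) • x) := by
  have hle : ∀ ℓ m : ℤ, C (ω + m • x) * C (y + (ℓ - m) • x) ≤ C (y + ω + ℓ • x) := by
    intro ℓ m
    rw [Submodule.mul_le]
    intro f hf g hg
    have h := hC _ _ f hf g hg
    have e : ω + m • x + (y + (ℓ - m) • x) = y + ω + ℓ • x := by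
      rw [sub_smul]; abel
    rwa [e] at h
  rw [Submodule.iSup_mul]
  simp only [Submodule.mul_iSup]
  constructor
  · intro h ℓ
    refine le_antisymm ?_ (iSup_le (hle ℓ))
    have key : (⨆ k : ℤ, ⨆ j : ℤ, C (ω + k • x) * C (y + j • x)) ≤
        (⨆ m : ℤ, C (ω + m • x) * C (y + (ℓ - m) • x)).comap (P (y + ω + ℓ • x)) := by
      refine iSup_le fun k => iSup_le fun j => ?_
      rw [Submodule.mul_le]
      intro f hf g hg
      rw [Submodule.mem_comap]
      have h1 := hC _ _ f hf g hg
      by_cases hj : j = ℓ - k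
      · subst hj
        have h2 := hle ℓ k (Submodule.mul_mem_mul hf hg)
        rw [hP1 _ _ h2]
        exact Submodule.mem_iSup_of_mem k (Submodule.mul_mem_mul hf hg)
      · rw [hP2 _ _ ?_ _ h1]
        · exact zero_mem _
        · intro hc
          apply hj
          have h0 : (j - (ℓ - k)) • x = 0 := by
            have e : (j - (ℓ - k)) • x = ω + k • x + (y + j • x) - (y + ω + ℓ • x) := by
              rw [sub_smul, sub_smul]; abel
            rw [e, hc, sub_self]
          exact sub_eq_zero.1 (hx _ h0)
    intro f hf
    have h1 : f ∈ ⨆ k : ℤ, C (y + ω + k • x) := Submodule.mem_iSup_of_mem ℓ hf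
    rw [h] at h1
    have h2 := key h1
    rwa [Submodule.mem_comap, hP1 _ _ hf] at h2
  · intro h
    apply le_antisymm
    · refine iSup_le fun ℓ => ?_
      rw [h ℓ]
      refine iSup_le fun m => ?_
      exact le_iSup_of_le m (le_iSup (fun j : ℤ => C (ω + m • x) * C (y + j • x)) (ℓ - m))
    · refine iSup_le fun k => iSup_le fun j => ?_
      have h1 := hle (j + k) k
      rw [add_sub_cancel_right] at h1
      exact h1.trans (le_iSup (fun k : ℤ => C (y + ω + k • x)) (j + k))


section Abs

variable {S Q A : Type} [CommRing S] [Algebra ℂ S] [AddCommGroup Q] [CommRing A] [Algebra ℂ A]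

/-- a graded piece, as a module over the degree-zero subalgebra. -/
def Gm (G : Q → Submodule ℂ S) (R : Subalgebra ℂ S) (hR : ∀ s, s ∈ R ↔ s ∈ G 0)
    (hG : ∀ z w, ∀ f ∈ G z, ∀ g ∈ G w, f * g ∈ G (z + w)) (z : Q) : Submodule R S where
  carrier := G z
  add_mem' := fun ha hb => add_mem ha hb
  zero_mem' := zero_mem _
  smul_mem' := fun r s hs => by
    have := hG 0 z _ ((hR _).1 r.2) s hs
    rwa [zero_add] at this

lemma Gm_mul (G : Q → Submodule ℂ S) (R : Subalgebra ℂ S) (hR : ∀ s, s ∈ R ↔ s ∈ G 0)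
    (hG : ∀ z w, ∀ f ∈ G z, ∀ g ∈ G w, f * g ∈ G (z + w)) (z w : Q) (s : S) :
    s ∈ Gm G R hR hG z * Gm G R hR hG w ↔ s ∈ G z * G w := by
  constructor
  · intro h
    refine Submodule.mul_induction_on h (fun f hf g hg => ?_) (fun a b ha hb => add_mem ha hb)
    exact Submodule.mul_mem_mul hf hg
  · intro h
    refine Submodule.mul_induction_on h (fun f hf g hg => ?_) (fun a b ha hb => add_mem ha hb)
    exact Submodule.mul_mem_mul (show f ∈ Gm G R hR hG z from hf)
      (show g ∈ Gm G R hR hG w from hg)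

lemma main_abs (G : Q → Submodule ℂ S) (R : Subalgebra ℂ S) (hR : ∀ s, s ∈ R ↔ s ∈ G 0)
    (hG : ∀ z w, ∀ f ∈ G z, ∀ g ∈ G w, f * g ∈ G (z + w))
    (pr : Q → S →ₗ[ℂ] S) (pr_mem : ∀ z s, pr z s ∈ G z)
    (pr_of_mem : ∀ z, ∀ s ∈ G z, pr z s = s)
    (pr_mul : ∀ z w s, ∀ t ∈ G w, pr (z + w) (s * t) = pr z s * t)
    (al : A →ₐ[ℂ] S) (hA0 : ∀ a, al a ∈ G 0)
    (β : Type) [Fintype β] (B B' : β → S) (F : S →ₗ[ℂ] A) (ω y : Q)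
    (hF1 : ∀ a s, F (al a * s) = a * F s) (hF2 : ∀ s, F (pr ω s) = F s)
    (hF3 : ∀ s, s = ∑ b, al (F (s * B' b)) * B b)
    (u v : A) (hu : ∀ a, u * a = 0 → a = 0)
    (hreg : ∀ a b, v * a = u * b → ∃ c, a = u * c)
    (hmax : (Ideal.span {u, v}).IsMaximal)
    (huW : al u ∈ G ω * G (-ω)) (hvW : al v ∈ G ω * G (-ω)) :
    (∀ h : LinearMap.ker (Finsupp.linearCombination R
        (id : Gm G R hR hG y → Gm G R hR hG y)) →ₗ[R] R,
      ∃ H : (Gm G R hR hG y →₀ R) →ₗ[R] R, ∀ k, H k.1 = h k) ↔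
    G (y + ω) = G ω * G y := by
  let _ : Algebra A S := al.toRingHom.toAlgebra
  let _ : Algebra A R := (al.codRestrict R (fun a => (hR _).2 (hA0 a))).toRingHom.toAlgebra
  have _ : IsScalarTower A R S := ⟨fun a r s => mul_assoc _ _ _⟩
  have hsm : ∀ (a : A) (s : S), a • s = al a * s := fun a s => rfl
  let φ : S →ₗ[A] A :=
    { toFun := F
      map_add' := map_add F
      map_smul' := hF1 }
  have hφF : ∀ s, φ s = F s := fun _ => rfl
  have hprA : ∀ z (a : A) s, pr z (a • s) = a • pr z s := by
    intro z a s
    have := pr_mul z 0 s _ (hA0 a)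
    rw [add_zero] at this
    rw [hsm, hsm, mul_comm, this, mul_comm]
  have hS : Module.Projective A S := by
    refine Module.Projective.of_split (M := β → A)
      (LinearMap.pi (fun b => φ ∘ₗ LinearMap.mulRight A (B' b)))
      (∑ b, (LinearMap.proj b : (β → A) →ₗ[A] A).smulRight (B b)) ?_
    ext s
    conv_rhs => rw [LinearMap.id_apply, hF3 s]
    simp [hsm, hφF]
  have hproj : ∀ z, Module.Projective A (Gm G R hR hG z) := by
    intro z
    let i : Gm G R hR hG z →ₗ[A] S := (Gm G R hR hG z).subtype.restrictScalars A
    let s : S →ₗ[A] Gm G R hR hG z :=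
      { toFun := fun s => ⟨pr z s, pr_mem z s⟩
        map_add' := fun a b => Subtype.ext (map_add _ a b)
        map_smul' := fun a b => Subtype.ext (hprA z a b) }
    refine Module.Projective.of_split i s ?_
    ext w
    exact pr_of_mem z _ w.2
  have _ := hproj ω
  have _ := hproj (y + ω)
  have hinj : Function.Injective (algebraMap R S) := Subtype.val_injective
  have hrs : ∀ (r : R) (s : S), r • s = (r : S) * s := fun _ _ => rfl
  have hrep : ∀ ψ : S →ₗ[A] A, ∃ t, ∀ s, ψ s = φ (t * s) := by
    intro ψ
    refine ⟨∑ b, ψ (B b) • B' b, fun s => ?_⟩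
    conv_lhs => rw [hF3 s, map_sum]
    rw [Finset.sum_mul, map_sum]
    refine Finset.sum_congr rfl fun b _ => ?_
    rw [← hsm, map_smul, smul_mul_assoc, map_smul, smul_eq_mul, smul_eq_mul, mul_comm, hφF,
      mul_comm s]
  have hpr0 : ∀ (t s : S), s ∈ G ω → φ (t * s) = φ (pr 0 t * s) := by
    intro t s hs
    have := pr_mul 0 ω t s hs
    rw [zero_add] at this
    rw [← this, hφF, hφF, hF2]
  have hφ : ∀ ψ : Gm G R hR hG ω →ₗ[A] A, ∃ r : R, ∀ w : Gm G R hR hG ω,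
      ψ w = φ (r • (w : S)) := by
    intro ψ
    let s : S →ₗ[A] Gm G R hR hG ω :=
      { toFun := fun s => ⟨pr ω s, pr_mem _ s⟩
        map_add' := fun a b => Subtype.ext (map_add _ a b)
        map_smul' := fun a b => Subtype.ext (hprA _ a b) }
    obtain ⟨t, ht⟩ := hrep (ψ ∘ₗ s)
    refine ⟨⟨pr 0 t, (hR _).2 (pr_mem 0 t)⟩, fun w => ?_⟩
    have h1 := ht w
    have h2 : s w = w := Subtype.ext (pr_of_mem _ _ w.2)
    rw [LinearMap.comp_apply, h2] at h1
    rw [h1, hrs]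
    exact hpr0 t w w.2
  have hφ' : ∀ r : R, (∀ w : Gm G R hR hG ω, φ (r • (w : S)) = 0) → r = 0 := by
    intro r hr
    have h0 : ∀ s, F (r.1 * s) = 0 := by
      intro s
      have h1 := pr_mul ω 0 s _ ((hR _).1 r.2)
      rw [add_zero] at h1
      rw [mul_comm, ← hF2, h1, mul_comm]
      exact hr ⟨pr ω s, pr_mem _ _⟩
    apply Subtype.ext
    rw [hF3 r.1]
    simp [h0]
  have huW' : algebraMap A S u ∈ Gm G R hR hG ω * Gm G R hR hG (-ω) := by
    rw [Gm_mul]; exact huW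
  have hvW' : algebraMap A S v ∈ Gm G R hR hG ω * Gm G R hR hG (-ω) := by
    rw [Gm_mul]; exact hvW
  let σ : Gm G R hR hG (-ω) → Gm G R hR hG ω →ₗ[R] R := fun w' =>
    { toFun := fun w => ⟨w' * w, (hR _).2 (by
        have := hG _ _ _ w'.2 _ w.2
        rwa [neg_add_cancel] at this)⟩
      map_add' := fun a b => Subtype.ext (mul_add _ _ _)
      map_smul' := fun r b => Subtype.ext (by
        change (w' : S) * (r.1 * b.1) = r.1 * (w' * b)
        ring) }
  have hσ : ∀ w' w, algebraMap R S (σ w' w) = w' * w := fun _ _ => rfl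
  have hiff : Gm G R hR hG (y + ω) = Gm G R hR hG ω * Gm G R hR hG y ↔
      G (y + ω) = G ω * G y := by
    rw [SetLike.ext_iff, SetLike.ext_iff]
    refine forall_congr' fun s => ?_
    rw [Gm_mul]
    rfl
  rw [← hiff]
  constructor
  · intro h
    refine core_mp hinj φ hφ hφ' u v hu hreg hmax huW' hvW' σ hσ ?_ ?_ h
    · rw [Submodule.mul_le]
      intro f hf g hg
      have := hG _ _ f hf g hg
      rw [add_comm ω] at this
      exact this
    · rw [Submodule.mul_le]
      intro f hf g hg
      have := hG _ _ f hf g hg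
      rw [neg_add_eq_sub, add_sub_cancel_right] at this
      exact this
  · intro h
    exact core_mpr hinj φ hφ hφ' u v hu hreg huW' hvW' σ hσ h

end Abs

lemma max_A : (Ideal.span {(X 0 : MvPolynomial (Fin 2) ℂ), X 1}).IsMaximal := by
  have : Ideal.span {(X 0 : MvPolynomial (Fin 2) ℂ), X 1} =
      RingHom.ker (constantCoeff : MvPolynomial (Fin 2) ℂ →+* ℂ) := by
    apply le_antisymm
    · rw [Ideal.span_le]
      rintro _ (rfl | h)
      · simp [RingHom.mem_ker]
      · rw [Set.mem_singleton_iff.1 h]; simp [RingHom.mem_ker]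
    · have key : ∀ f : MvPolynomial (Fin 2) ℂ, f - C (constantCoeff f) ∈
          Ideal.span {(X 0 : MvPolynomial (Fin 2) ℂ), X 1} := by
        intro f
        induction f using MvPolynomial.induction_on with
        | C t => simp
        | add f g hf hg =>
          rw [map_add, map_add, add_sub_add_comm]; exact add_mem hf hg
        | mul_X f j hf =>
          rw [map_mul, constantCoeff_X, mul_zero, map_zero, sub_zero]
          apply Ideal.mul_mem_left
          apply Ideal.subset_span
          fin_cases j <;> simp
      intro f hf
      have := key f
      rwa [RingHom.mem_ker.1 hf, map_zero, sub_zero] at this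
  rw [this]
  exact RingHom.ker_isMaximal_of_surjective _ (fun t => ⟨C t, by simp⟩)

lemma reg_A (a b : MvPolynomial (Fin 2) ℂ) (h : X 1 * a = X 0 * b) : ∃ c, a = X 0 * c := by
  have h1 : (X 0 : MvPolynomial (Fin 2) ℂ) ∣ X 1 * a := ⟨b, h⟩
  have hprime : Prime (X 0 : MvPolynomial (Fin 2) ℂ) := X_prime
  rcases hprime.dvd_or_dvd h1 with h2 | h2
  · rw [X_dvd_X] at h2
    simp at h2
  · exact h2


section Concrete2

variable {ι : Type} [Fintype ι] [DecidableEq ι] {p : ι → ℕ} {c0 c1 : ι → ℂ}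

lemma main_conc {Q : Type} [AddCommGroup Q] (q : LGroup ι p →+ Q)
    (R : Subalgebra ℂ (SAlg ι p c0 c1)) (hR : ∀ s, s ∈ R ↔ s ∈ SG c0 c1 q 0)
    (hG : ∀ z w : Q, ∀ f ∈ SG c0 c1 q z, ∀ g ∈ SG c0 c1 q w, f * g ∈ SG c0 c1 q (z + w))
    (hp : ∀ i, 2 ≤ p i)
    (hdist : ∀ i j : ι, i ≠ j → c0 i * c1 j ≠ c1 i * c0 j)
    (a : ι → ℕ) (aZ : ℤ) (hx : q ((∑ i, a i • egen p i) + aZ • cgen p) = 0)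
    (hgcd : ∀ i, Nat.gcd (p i) (a i) = 1)
    (E : ℕ) (hE0 : 0 < E) (hE : ∀ z : Q, E • z = 0)
    (ω : LGroup ι p) (hω : ω = ((Fintype.card ι : ℤ) - 2) • cgen p - ∑ i, egen p i)
    (y : LGroup ι p) :
    (∀ h : LinearMap.ker (Finsupp.linearCombination R
        (id : Gm (SG c0 c1 q) R hR hG (q y) → Gm (SG c0 c1 q) R hR hG (q y))) →ₗ[R] R,
      ∃ H : (Gm (SG c0 c1 q) R hR hG (q y) →₀ R) →ₗ[R] R, ∀ k, H k.1 = h k) ↔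
    SG c0 c1 q (q (y + ω)) = SG c0 c1 q (q ω) * SG c0 c1 q (q y) := by
  obtain ⟨K, hK, hKq, hKW⟩ := exists_K (c0 := c0) (c1 := c1) q hp hdist a aZ hx hgcd E hE0 hE ω
  obtain ⟨β, hβ, B, B', F, hF1, hF2, hF3⟩ :=
    exists_frob (c0 := c0) (c1 := c1) q hp K hK hKq ω hω
  rw [map_add]
  have hW : ∀ j, aA p c0 c1 K (X j) ∈ SG c0 c1 q (q ω) * SG c0 c1 q (-(q ω)) := by
    intro j
    rw [aA_X, ← map_neg]; exact hKW j
  exact main_abs (SG c0 c1 q) R hR hG (pr c0 c1 q) (pr_mem q) (fun z s hs => pr_of_mem q hs)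
    (fun z w s t ht => pr_mul q z w s ht) (aA p c0 c1 K) (aA_mem q K hKq) β B B' F (q ω) (q y)
    hF1 hF2 hF3 (X 0) (X 1)
    (fun a ha => (mul_eq_zero.1 ha).resolve_left (X_ne_zero 0)) reg_A max_A (hW 0) (hW 1)

lemma comp_conc (x : LGroup ι p) (hx : ∀ k : ℤ, k • x = 0 → k = 0) (y ω : LGroup ι p) :
    SShiftA p c0 c1 (y + ω) x = SShiftA p c0 c1 ω x * SShiftA p c0 c1 y x ↔
    ∀ ℓ : ℤ, SCompA p c0 c1 (y + ω + ℓ • x) =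
      ⨆ m : ℤ, SCompA p c0 c1 (ω + m • x) * SCompA p c0 c1 (y + (ℓ - m) • x) := by
  refine comp_abs (SCompA p c0 c1) x hx (pr c0 c1 (AddMonoidHom.id (LGroup ι p)))
    (fun z f hf => ?_) (fun z z' h f hf => ?_) (fun z w f hf g hg => ?_) y ω
  · rw [SCompA_eq] at hf
    exact pr_of_mem (AddMonoidHom.id (LGroup ι p)) hf
  · rw [SCompA_eq] at hf
    exact pr_of_mem_ne (AddMonoidHom.id (LGroup ι p)) h hf
  · rw [SCompA_eq] at hf hg ⊢
    exact SG_mul (AddMonoidHom.id (LGroup ι p)) hf hg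

lemma exists_Q (hp : ∀ i, 2 ≤ p i) (x : LGroup ι p) (hx0 : x ≠ 0) (hxp : x ∈ Lplus p) :
    ∃ (Q : Type) (_ : AddCommGroup Q) (q : LGroup ι p →+ Q), q x = 0 ∧
      (∃ E : ℕ, 0 < E ∧ ∀ z : Q, E • z = 0) ∧
      (∀ y, SShiftA p c0 c1 y x = SG c0 c1 q (q y)) ∧ SVerA p c0 c1 x = SG c0 c1 q 0 := by
  refine ⟨LQ x, inferInstance, qx x, ?_, ?_, ?_, ?_⟩
  · exact qx_self x
  · exact (tors_facts hp x hx0 hxp).2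
  · exact fun y => SShiftA_eq y x
  · exact SVerA_eq x

end Concrete2

open CategoryTheory in
/-- Criterion for `S(y)^x` to be a special CM `R = S^x`-module:
`Ext¹_R(S(y)^x, R) = 0` iff `S_{y+ω+ℓx} = ∑ₘ S_{ω+mx}·S_{y+(ℓ−m)x}` for all `ℓ ∈ ℤ`. -/
theorem special_iff_component_equation (n : ℕ) (hn : 1 ≤ n) (p : Fin n → ℕ)
    (hp : ∀ i, 2 ≤ p i)
    (c0 c1 : Fin n → ℂ) (hnz : ∀ i, (c0 i, c1 i) ≠ (0, 0))
    (hdist : ∀ i j : Fin n, i ≠ j → c0 i * c1 j ≠ c1 i * c0 j)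
    (x : LGroup (Fin n) p) (hx0 : x ≠ 0) (hxp : x ∈ Lplus p)
    (a : Fin n → ℕ) (ha : ∀ i, a i < p i) (aZ : ℤ)
    (hxnf : x = (∑ i, a i • egen p i) + aZ • cgen p)
    (hgcd : ∀ i, Nat.gcd (p i) (a i) = 1)
    (y : LGroup (Fin n) p)
    (R : Subalgebra ℂ (SAlg (Fin n) p c0 c1))
    (hR : Subalgebra.toSubmodule R = SVerA p c0 c1 x)
    (M : Submodule ↥R (SAlg (Fin n) p c0 c1))
    (hM : (M : Set (SAlg (Fin n) p c0 c1)) = ↑(SShiftA p c0 c1 y x)) :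
    Subsingleton (((Ext ↥R (ModuleCat ↥R) 1).obj
        (Opposite.op (ModuleCat.of ↥R ↥M))).obj (ModuleCat.of ↥R ↥R)) ↔
      ∀ ℓ : ℤ,
        SCompA p c0 c1 (y + (((n : ℤ) - 2) • cgen p - ∑ i, egen p i) + ℓ • x) =
          ⨆ m : ℤ, SCompA p c0 c1 ((((n : ℤ) - 2) • cgen p - ∑ i, egen p i) + m • x) *
            SCompA p c0 c1 (y + (ℓ - m) • x) := by
  have hxx := (tors_facts hp x hx0 hxp).1
  obtain ⟨Q, _, q, hqx, ⟨E, hE0, hE⟩, hS1, hS0⟩ := exists_Q (c0 := c0) (c1 := c1) hp x hx0 hxp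
  have hR' : ∀ s, s ∈ R ↔ s ∈ SG c0 c1 q 0 := by
    intro s
    rw [← hS0, ← hR, Subalgebra.mem_toSubmodule]
  have hG : ∀ z w : Q, ∀ f ∈ SG c0 c1 q z, ∀ g ∈ SG c0 c1 q w, f * g ∈ SG c0 c1 q (z + w) :=
    fun z w f hf g hg => SG_mul q hf hg
  have hM' : M = Gm (SG c0 c1 q) R hR' hG (q y) := by
    apply SetLike.coe_injective
    rw [hM, hS1]; rfl
  subst hM'
  have hqx' : q ((∑ i, a i • egen p i) + aZ • cgen p) = 0 := by
    rw [← hxnf]; exact hqx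
  have h1 := main_conc q R hR' hG hp hdist a aZ hqx' hgcd E hE0 hE
    (((n : ℤ) - 2) • cgen p - ∑ i, egen p i) (by rw [Fintype.card_fin]) y
  rw [← hS1, ← hS1, ← hS1] at h1
  exact (ext_iff_ker _ _).trans (h1.trans (comp_conc x hxx y _))
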